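/- arXiv:1511.00802 — 3 statements merged into one kernel-verified Lean document; each statement's English description precedes it below -/
import Mathlib

section
/- Let T ⊆ M_n be an admissible set. Then: (1) the two-sided ideal ⟨T⟩ of A_q generated by T is a completely prime ideal (i.e. A_q/⟨T⟩ is a domain); (2) the ideal ⟨T⟩ of the multi-parameter Poisson Weyl algebra A_1 generated by T is a Poisson prime ideal. -/
/-!
Both quotients are handled by one argument. Let `Q` be an algebra generated by elements `y_i`, `x_i`
that satisfy the relations of the quantized Weyl algebra and kill the admissible set `T`. It is
compared with a quantum torus with generators `Y_1, …, Y_n, Z_1, …, Z_n`, acting by weighted shifts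
on the vector space with basis `ℤⁿ × ℤⁿ`. With `δ_m = 0` if `z_m ∈ T` and `δ_m = 1` otherwise, the
assignment `y_i ↦ Y_i`, `x_i ↦ Y_i⁻¹ (δ_i Z_i - δ_{i-1} Z_{i-1})` satisfies the relations and sends
`z_m` to `δ_m Z_m`. If `y_i` or `x_i` lies in `T`, then admissibility gives `δ_i = δ_{i-1} = 0`; if
`y_i ∈ T`, then `y_i` is sent to `0` instead, and `x_i` to `Y_i⁻¹ Z_i` unless it lies in `T` as well
(`Adm.weylFam_rep`).

Order the lattice lexicographically and say that an operator has a leading shift `g` if it maps each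
`e_h` to a nonzero multiple of `e_{g+h}` plus lower terms (`Lead`). Leading shifts add up under
multiplication, so `Q` is a domain once each of its nonzero elements is known to act with a leading
shift (`domain_of_rep`). This is proved by induction on the number of pairs of generators
(`lead_of_ne_zero`). Over the algebra generated by the previous pairs, the next algebra is spanned by
monomials `y_i^a x_i^b`: all of them if `z_i ∉ T`; those with `a = 0` or `b = 0` if `z_i ∈ T` but
`y_i, x_i ∉ T`, since then `y_i x_i = x_i y_i = -z_{i-1}`; and the powers of the surviving generator,
if any, if `y_i` or `x_i` lies in `T`. In each case the leading shifts of these monomials are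
distinct modulo the sublattice of the previous indices, so the leading terms of a nonzero combination
cannot cancel. In particular no basis theorem for the quantized Weyl algebra is needed.

The commutative polynomial ring satisfies the relations with all parameters equal to `1`, so the same
theorem shows that the ideal of `A₁` generated by `T` is prime (`comm_part`). It is a Poisson ideal
because `{z_m, v}` is a multiple of `z_m` for each variable `v`, and because `{y_i, x_i}` is a
multiple of `z_i`, which lies in `T` whenever `y_i` or `x_i` does (`poisson_part`). A prime Poisson
ideal is Poisson prime.
-/

set_option linter.unusedSectionVars false

/-- A Poisson bracket on a commutative ring: a biadditive Lie bracket satisfying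
the Leibniz rule. -/
structure PoissonBr (R : Type) [CommRing R] where
  br : R → R → R
  add_left : ∀ a b c, br (a + b) c = br a c + br b c
  skew : ∀ a b, br a b = - br b a
  jacobi : ∀ a b c, br a (br b c) = br (br a b) c + br b (br a c)
  leibniz : ∀ a b c, br (a * b) c = a * br b c + br a c * b

/-- `I` is a Poisson ideal for the bracket `br`: an ideal with `{I, R} ⊆ I`. -/
def IsPoissonIdeal {R : Type} [CommRing R] (br : R → R → R) (I : Ideal R) : Prop :=
  ∀ a ∈ I, ∀ b, br a b ∈ I

/-- `P` is a Poisson prime ideal: a proper Poisson ideal such that `IJ ⊆ P` implies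
`I ⊆ P` or `J ⊆ P` for all Poisson ideals `I`, `J`. -/
def IsPoissonPrime {R : Type} [CommRing R] (br : R → R → R) (P : Ideal R) : Prop :=
  IsPoissonIdeal br P ∧ P ≠ ⊤ ∧
    ∀ I J : Ideal R, IsPoissonIdeal br I → IsPoissonIdeal br J →
      (∀ a ∈ I, ∀ b ∈ J, a * b ∈ P) → I ≤ P ∨ J ≤ P

/-- A prime two-sided ideal of a (not necessarily commutative) ring: a proper
two-sided ideal `P` such that `IJ ⊆ P` implies `I ⊆ P` or `J ⊆ P`. -/
def IsPrimeTS {R : Type} [Ring R] (P : TwoSidedIdeal R) : Prop :=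
  P ≠ ⊤ ∧ ∀ I J : TwoSidedIdeal R, (∀ a ∈ I, ∀ b ∈ J, a * b ∈ P) → I ≤ P ∨ J ≤ P

/-- The two-sided ideal generated by a subset `S` of a ring. -/
def tsSpan {R : Type} [Ring R] (S : Set R) : TwoSidedIdeal R :=
  sInf {J : TwoSidedIdeal R | S ⊆ J}

/-- The defining relations of the algebra `A_q` (the rescaled multi-parameter
quantized Weyl algebra), on generators `Sum.inl i = y_i`, `Sum.inr i = x_i`. -/
inductive AqRel (n : ℕ) (q : Fin n → ℂ) (lam : Fin n → Fin n → ℂ) :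
    FreeAlgebra ℂ (Fin n ⊕ Fin n) → FreeAlgebra ℂ (Fin n ⊕ Fin n) → Prop
  | yy (i j : Fin n) (h : i < j) : AqRel n q lam
      (FreeAlgebra.ι ℂ (Sum.inl j) * FreeAlgebra.ι ℂ (Sum.inl i))
      (lam j i • (FreeAlgebra.ι ℂ (Sum.inl i) * FreeAlgebra.ι ℂ (Sum.inl j)))
  | yx (i j : Fin n) (h : i < j) : AqRel n q lam
      (FreeAlgebra.ι ℂ (Sum.inl j) * FreeAlgebra.ι ℂ (Sum.inr i))
      (lam i j • (FreeAlgebra.ι ℂ (Sum.inr i) * FreeAlgebra.ι ℂ (Sum.inl j)))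
  | xy (i j : Fin n) (h : i < j) : AqRel n q lam
      (FreeAlgebra.ι ℂ (Sum.inr j) * FreeAlgebra.ι ℂ (Sum.inl i))
      ((q i * lam i j) • (FreeAlgebra.ι ℂ (Sum.inl i) * FreeAlgebra.ι ℂ (Sum.inr j)))
  | xx (i j : Fin n) (h : i < j) : AqRel n q lam
      (FreeAlgebra.ι ℂ (Sum.inr j) * FreeAlgebra.ι ℂ (Sum.inr i))
      (((q i)⁻¹ * (lam i j)⁻¹) • (FreeAlgebra.ι ℂ (Sum.inr i) * FreeAlgebra.ι ℂ (Sum.inr j)))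
  | weyl (i : Fin n) : AqRel n q lam
      (FreeAlgebra.ι ℂ (Sum.inr i) * FreeAlgebra.ι ℂ (Sum.inl i)
        - q i • (FreeAlgebra.ι ℂ (Sum.inl i) * FreeAlgebra.ι ℂ (Sum.inr i)))
      ((q i - 1) • (1 + ∑ k ∈ Finset.Iio i,
        FreeAlgebra.ι ℂ (Sum.inl k) * FreeAlgebra.ι ℂ (Sum.inr k)))

/-- The generator `y_i` of `A_q`. -/
noncomputable def Yq (n : ℕ) (q : Fin n → ℂ) (lam : Fin n → Fin n → ℂ) (i : Fin n) :
    RingQuot (AqRel n q lam) :=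
  RingQuot.mkAlgHom ℂ (AqRel n q lam) (FreeAlgebra.ι ℂ (Sum.inl i))

/-- The generator `x_i` of `A_q`. -/
noncomputable def Xq (n : ℕ) (q : Fin n → ℂ) (lam : Fin n → Fin n → ℂ) (i : Fin n) :
    RingQuot (AqRel n q lam) :=
  RingQuot.mkAlgHom ℂ (AqRel n q lam) (FreeAlgebra.ι ℂ (Sum.inr i))

/-- The element `z_m = 1 + ∑_{k=1}^m y_k x_k` of `A_q` (1-indexed: the sum is over
the generators with (0-indexed) index `< m`). -/
noncomputable def Zq (n : ℕ) (q : Fin n → ℂ) (lam : Fin n → Fin n → ℂ) (m : ℕ) :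
    RingQuot (AqRel n q lam) :=
  1 + ∑ k ∈ Finset.univ.filter (fun k : Fin n => (k : ℕ) < m), Yq n q lam k * Xq n q lam k

/-- The generator `y_i` of the multi-parameter Poisson Weyl algebra
`A₁ = ℂ[y_1, x_1, …, y_n, x_n]`. -/
noncomputable def yP (n : ℕ) (i : Fin n) : MvPolynomial (Fin n ⊕ Fin n) ℂ :=
  MvPolynomial.X (Sum.inl i)

/-- The generator `x_i` of the multi-parameter Poisson Weyl algebra. -/
noncomputable def xP (n : ℕ) (i : Fin n) : MvPolynomial (Fin n ⊕ Fin n) ℂ :=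
  MvPolynomial.X (Sum.inr i)

/-- The element `z_m = 1 + ∑_{k=1}^m y_k x_k` of the Poisson Weyl algebra
(1-indexed: the sum is over generators with (0-indexed) index `< m`). -/
noncomputable def zP (n : ℕ) (m : ℕ) : MvPolynomial (Fin n ⊕ Fin n) ℂ :=
  1 + ∑ k ∈ Finset.univ.filter (fun k : Fin n => (k : ℕ) < m), yP n k * xP n k

/-- The set `M_n = {z_1, z_2, y_2, x_2, …, z_n, y_n, x_n}` inside `A_q`
(1-indexed; in 0-indexed terms the y's and x's have index `≥ 1`). -/
noncomputable def MnQ (n : ℕ) (q : Fin n → ℂ) (lam : Fin n → Fin n → ℂ) :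
    Set (RingQuot (AqRel n q lam)) :=
  {p | p = Zq n q lam 1 ∨ ∃ i : Fin n, 1 ≤ (i : ℕ) ∧
    (p = Zq n q lam ((i : ℕ) + 1) ∨ p = Yq n q lam i ∨ p = Xq n q lam i)}

/-- A subset `T ⊆ M_n` of `A_q` is admissible if, for `2 ≤ i ≤ n` (1-indexed),
`y_i ∈ T` or `x_i ∈ T` iff `z_i ∈ T` and `z_{i-1} ∈ T`. -/
def AdmissibleQ (n : ℕ) (q : Fin n → ℂ) (lam : Fin n → Fin n → ℂ)
    (T : Set (RingQuot (AqRel n q lam))) : Prop :=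
  T ⊆ MnQ n q lam ∧ ∀ i : Fin n, 1 ≤ (i : ℕ) →
    ((Yq n q lam i ∈ T ∨ Xq n q lam i ∈ T) ↔
      (Zq n q lam ((i : ℕ) + 1) ∈ T ∧ Zq n q lam (i : ℕ) ∈ T))

/-- The set `M_n = {z_1, z_2, y_2, x_2, …, z_n, y_n, x_n}` inside the
multi-parameter Poisson Weyl algebra `A₁`. -/
noncomputable def MnP (n : ℕ) : Set (MvPolynomial (Fin n ⊕ Fin n) ℂ) :=
  {p | p = zP n 1 ∨ ∃ i : Fin n, 1 ≤ (i : ℕ) ∧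
    (p = zP n ((i : ℕ) + 1) ∨ p = yP n i ∨ p = xP n i)}

/-- A subset `T ⊆ M_n` of `A₁` is admissible if, for `2 ≤ i ≤ n` (1-indexed),
`y_i ∈ T` or `x_i ∈ T` iff `z_i ∈ T` and `z_{i-1} ∈ T`. -/
def AdmissibleP (n : ℕ) (T : Set (MvPolynomial (Fin n ⊕ Fin n) ℂ)) : Prop :=
  T ⊆ MnP n ∧ ∀ i : Fin n, 1 ≤ (i : ℕ) →
    ((yP n i ∈ T ∨ xP n i ∈ T) ↔ (zP n ((i : ℕ) + 1) ∈ T ∧ zP n (i : ℕ) ∈ T))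

/-! ### Operators with a leading shift -/

namespace QWeyl

open Finsupp

section Lead

variable {Γ : Type} [AddCommGroup Γ] [LinearOrder Γ] [IsOrderedAddMonoid Γ]

/-- The operators on the vector space with basis `(e_h)`, `h ∈ Γ`. -/
abbrev Op (Γ : Type) : Type := Module.End ℂ (Γ →₀ ℂ)

/-- The operator `f` has leading shift `g`: for every basis vector, `f e_h` is a nonzero multiple
of `e_{g+h}` plus a combination of basis vectors of strictly smaller index. -/
def Lead (f : Op Γ) (g : Γ) : Prop :=
  ∀ h : Γ, ∃ c : ℂ, c ≠ 0 ∧ f (single h 1) - single (g + h) c ∈ supported ℂ ℂ (Set.Iio (g + h))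

lemma Lead.ne_zero {f : Op Γ} {g : Γ} (hf : Lead f g) : f ≠ 0 := by
  rintro rfl
  obtain ⟨c, hc, h⟩ := hf 0
  rw [mem_supported'] at h
  have := h (g + 0) (by simp)
  simp at this
  exact hc this

lemma Lead.map_supported {f : Op Γ} {g : Γ} (hf : Lead f g) (k : Γ) {v : Γ →₀ ℂ}
    (hv : v ∈ supported ℂ ℂ (Set.Iio k)) : f v ∈ supported ℂ ℂ (Set.Iio (g + k)) := by
  rw [supported_eq_span_single] at hv
  induction hv using Submodule.span_induction with
  | mem x hx =>
    obtain ⟨h, hh, rfl⟩ := hx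
    obtain ⟨c, -, hc⟩ := hf h
    have hlt : g + h < g + k := by simpa using hh
    have h1 : single (g + h) c ∈ supported ℂ ℂ (Set.Iio (g + k)) :=
      single_mem_supported _ _ hlt
    have h2 := supported_mono (R := ℂ) (M := ℂ)
      (Set.Iio_subset_Iio hlt.le) hc
    simpa using Submodule.add_mem _ h2 h1
  | zero => simp
  | add x y _ _ hx hy => rw [map_add]; exact Submodule.add_mem _ hx hy
  | smul a x _ hx => rw [map_smul]; exact Submodule.smul_mem _ _ hx

lemma Lead.mul {f f' : Op Γ} {g g' : Γ} (hf : Lead f g) (hf' : Lead f' g') :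
    Lead (f * f') (g + g') := by
  intro h
  obtain ⟨c, hc, h1⟩ := hf' h
  obtain ⟨d, hd, h2⟩ := hf (g' + h)
  refine ⟨c * d, mul_ne_zero hc hd, ?_⟩
  have h3 := hf.map_supported _ h1
  have h4 := Submodule.smul_mem _ c h2
  rw [add_assoc]
  have key : (f * f') (single h 1) - single (g + (g' + h)) (c * d) =
      f (f' (single h 1) - single (g' + h) c) +
        c • (f (single (g' + h) 1) - single (g + (g' + h)) d) := by
    rw [map_sub, smul_sub, ← map_smul]
    simp
  rw [key]
  exact Submodule.add_mem _ h3 h4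

lemma Lead.one : Lead (1 : Op Γ) 0 := fun h => ⟨1, one_ne_zero, by simp⟩

lemma Lead.pow {f : Op Γ} {g : Γ} (hf : Lead f g) (k : ℕ) : Lead (f ^ k) (k • g) := by
  induction k with
  | zero => simpa using Lead.one
  | succ k ih => rw [pow_succ, succ_nsmul]; exact ih.mul hf

lemma Lead.smul {f : Op Γ} {g : Γ} (hf : Lead f g) {a : ℂ} (ha : a ≠ 0) : Lead (a • f) g := by
  intro h
  obtain ⟨c, hc, h1⟩ := hf h
  refine ⟨a * c, mul_ne_zero ha hc, ?_⟩
  have := Submodule.smul_mem _ a h1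
  simpa [smul_sub] using this

lemma Lead.add_of_lt {f f' : Op Γ} {g g' : Γ} (hf : Lead f g) (hf' : Lead f' g') (hlt : g' < g) :
    Lead (f + f') g := by
  intro h
  obtain ⟨c, hc, h1⟩ := hf h
  obtain ⟨d, -, h2⟩ := hf' h
  refine ⟨c, hc, ?_⟩
  have hlt' : g' + h < g + h := by simpa using hlt
  have h3 : single (g' + h) d ∈ supported ℂ ℂ (Set.Iio (g + h)) :=
    single_mem_supported _ _ hlt'
  have h4 := supported_mono (R := ℂ) (M := ℂ) (Set.Iio_subset_Iio hlt'.le) h2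
  have key : (f + f') (single h 1) - single (g + h) c =
      (f (single h 1) - single (g + h) c) +
        ((f' (single h 1) - single (g' + h) d) + single (g' + h) d) := by
    simp only [LinearMap.add_apply]; abel
  rw [key]
  exact Submodule.add_mem _ h1 (Submodule.add_mem _ h4 h3)

/-- A finite nonempty sum of operators with pairwise distinct leading shifts has the largest of
these as its leading shift. -/
lemma Lead.sum {ι : Type} (F : Finset ι) (hF : F.Nonempty) (f : ι → Op Γ) (g : ι → Γ)
    (hf : ∀ s ∈ F, Lead (f s) (g s)) (hg : ∀ s ∈ F, ∀ t ∈ F, s ≠ t → g s ≠ g t) :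
    ∃ s ∈ F, Lead (∑ t ∈ F, f t) (g s) := by
  classical
  induction hF using Finset.Nonempty.cons_induction with
  | singleton a => exact ⟨a, by simp, by simpa using hf a (by simp)⟩
  | cons a F ha hne ih =>
    obtain ⟨s, hs, hL⟩ := ih (fun s hs => hf s (by simp [hs]))
      (fun s hs t ht => hg s (by simp [hs]) t (by simp [ht]))
    have hLa := hf a (by simp)
    have hne' : g a ≠ g s := hg a (by simp) s (by simp [hs]) (by rintro rfl; exact ha hs)
    rw [Finset.sum_cons]
    rcases lt_or_gt_of_ne hne' with h | h
    · exact ⟨s, by simp [hs], by rw [add_comm]; exact hL.add_of_lt hLa h⟩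
    · exact ⟨a, by simp, hLa.add_of_lt hL h⟩

end Lead

/-! ### Adjoining one pair of generators -/

section Step

variable {Q : Type} [Ring Q] [Algebra ℂ Q]

lemma exists_mul_comm_adjoin {S : Set Q} {y : Q} (hS : ∀ s ∈ S, ∃ c : ℂ, y * s = c • (s * y))
    {w : Q} (hw : w ∈ Algebra.adjoin ℂ S) : ∃ w' ∈ Algebra.adjoin ℂ S, y * w = w' * y := by
  induction hw using Algebra.adjoin_induction with
  | mem s hs =>
    obtain ⟨c, hc⟩ := hS s hs
    exact ⟨c • s, Subalgebra.smul_mem _ (Algebra.subset_adjoin hs) _, by rw [hc, smul_mul_assoc]⟩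
  | algebraMap r =>
    exact ⟨algebraMap ℂ Q r, Subalgebra.algebraMap_mem _ _, (Algebra.commutes r y).symm⟩
  | add a b _ _ iha ihb =>
    obtain ⟨a', ha', ha⟩ := iha
    obtain ⟨b', hb', hb⟩ := ihb
    exact ⟨a' + b', add_mem ha' hb', by rw [mul_add, ha, hb, add_mul]⟩
  | mul a b _ _ iha ihb =>
    obtain ⟨a', ha', ha⟩ := iha
    obtain ⟨b', hb', hb⟩ := ihb
    exact ⟨a' * b', mul_mem ha' hb', by rw [← mul_assoc, ha, mul_assoc, hb, mul_assoc]⟩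

/-- The left `R`-submodule of `Q` spanned by the monomials `y^a x^b`, `(a, b) ∈ S`. -/
abbrev monSpan (R : Subalgebra ℂ Q) (y x : Q) (S : Set (ℕ × ℕ)) : Submodule R Q :=
  Submodule.span R ((fun s : ℕ × ℕ => y ^ s.1 * x ^ s.2) '' S)

lemma mul_mem_monSpan {R : Subalgebra ℂ Q} {y x : Q} {S : Set (ℕ × ℕ)} {u w : Q} (hu : u ∈ R)
    (hw : w ∈ monSpan R y x S) : u * w ∈ monSpan R y x S :=
  Submodule.smul_mem _ (⟨u, hu⟩ : R) hw

lemma smul_mem_monSpan {R : Subalgebra ℂ Q} {y x : Q} {S : Set (ℕ × ℕ)} (c : ℂ) {w : Q}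
    (hw : w ∈ monSpan R y x S) : c • w ∈ monSpan R y x S := by
  rw [Algebra.smul_def]
  exact mul_mem_monSpan (Subalgebra.algebraMap_mem _ _) hw

lemma mon_mem_monSpan (R : Subalgebra ℂ Q) (y x : Q) {S : Set (ℕ × ℕ)} {a b : ℕ}
    (h : (a, b) ∈ S) : y ^ a * x ^ b ∈ monSpan R y x S :=
  Submodule.subset_span ⟨(a, b), h, rfl⟩

/-- If `u` normalises `R` and sends the spanning monomials into the span, then the span is stable
under left multiplication by `u`. -/
lemma mul_left_mem_monSpan {R : Subalgebra ℂ Q} {y x : Q} {S : Set (ℕ × ℕ)} {u : Q}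
    (hn : ∀ w ∈ R, ∃ w' ∈ R, u * w = w' * u)
    (hu : ∀ s ∈ S, u * (y ^ s.1 * x ^ s.2) ∈ monSpan R y x S) {w : Q}
    (hw : w ∈ monSpan R y x S) : u * w ∈ monSpan R y x S := by
  induction hw using Submodule.span_induction with
  | mem w hw => obtain ⟨s, hs, rfl⟩ := hw; exact hu s hs
  | zero => simp
  | add a b _ _ ha hb => rw [mul_add]; exact add_mem ha hb
  | smul r w _ ih =>
    obtain ⟨r', hr', h⟩ := hn r r.2
    have : u * (r • w) = r' * (u * w) := by
      rw [← mul_assoc, ← h, mul_assoc]; rfl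
    rw [this]
    exact mul_mem_monSpan hr' ih

lemma mem_monSpan_of_mem_adjoin {B : Set Q} {y x : Q} {S : Set (ℕ × ℕ)} (h0 : (0, 0) ∈ S)
    (hyn : ∀ w ∈ Algebra.adjoin ℂ B, ∃ w' ∈ Algebra.adjoin ℂ B, y * w = w' * y)
    (hxn : ∀ w ∈ Algebra.adjoin ℂ B, ∃ w' ∈ Algebra.adjoin ℂ B, x * w = w' * x)
    (hy : ∀ s ∈ S, y * (y ^ s.1 * x ^ s.2) ∈ monSpan (Algebra.adjoin ℂ B) y x S)
    (hx : ∀ s ∈ S, x * (y ^ s.1 * x ^ s.2) ∈ monSpan (Algebra.adjoin ℂ B) y x S)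
    {w : Q} (hw : w ∈ Algebra.adjoin ℂ (B ∪ {y, x})) :
    w ∈ monSpan (Algebra.adjoin ℂ B) y x S := by
  -- the elements stabilising the span by left multiplication contain all generators
  suffices h : ∀ v ∈ monSpan (Algebra.adjoin ℂ B) y x S,
      w * v ∈ monSpan (Algebra.adjoin ℂ B) y x S by
    have := h 1 (by simpa using mon_mem_monSpan (Algebra.adjoin ℂ B) y x h0)
    simpa using this
  induction hw using Algebra.adjoin_induction with
  | mem s hs =>
    intro v hv
    rcases hs with hs | rfl | rfl
    · exact mul_mem_monSpan (Algebra.subset_adjoin hs) hv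
    · exact mul_left_mem_monSpan hyn hy hv
    · exact mul_left_mem_monSpan hxn hx hv
  | algebraMap r =>
    intro v hv
    exact mul_mem_monSpan (Subalgebra.algebraMap_mem _ _) hv
  | add a b _ _ iha ihb =>
    intro v hv
    rw [add_mul]; exact add_mem (iha v hv) (ihb v hv)
  | mul a b _ _ iha ihb =>
    intro v hv
    rw [mul_assoc]; exact iha _ (ihb v hv)

lemma x_mul_y_pow {y x z : Q} {q : ℂ} (hxy : x * y = q • (y * x) + (q - 1) • z)
    (hzy : z * y = y * z) (a : ℕ) :
    x * y ^ (a + 1) = q ^ (a + 1) • (y ^ (a + 1) * x) + (q ^ (a + 1) - 1) • (z * y ^ a) := by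
  induction a with
  | zero => simp [hxy]
  | succ a ih =>
    have hz : y ^ (a + 1) * z = z * y ^ (a + 1) := by
      have : Commute z y := hzy
      exact (this.pow_right _).symm.eq
    rw [pow_succ y (a + 1), ← mul_assoc, ih, add_mul, smul_mul_assoc, smul_mul_assoc, mul_assoc, hxy,
      mul_add, mul_smul_comm, mul_smul_comm, hz, mul_assoc z, ← pow_succ, ← mul_assoc (y ^ (a + 1))]
    module

/-- The inductive step: if nonzero elements of `R` act with a leading shift lying in `H`, and the
leading shifts of the spanning monomials are pairwise distinct modulo `H`, then nonzero elements of
the span act with a leading shift as well, because no two leading terms can cancel. -/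
lemma lead_step {Γ : Type} [AddCommGroup Γ] [LinearOrder Γ] [IsOrderedAddMonoid Γ]
    (φ : Q →ₐ[ℂ] Op Γ) {R : Subalgebra ℂ Q} {y x : Q} {S : Set (ℕ × ℕ)}
    (H H' : AddSubgroup Γ) (hHH : H ≤ H') (l : ℕ × ℕ → Γ)
    (hR : ∀ w ∈ R, w ≠ 0 → ∃ g ∈ H, Lead (φ w) g)
    (hl : ∀ s ∈ S, Lead (φ (y ^ s.1 * x ^ s.2)) (l s)) (hlH : ∀ s ∈ S, l s ∈ H')
    (hinj : ∀ s ∈ S, ∀ t ∈ S, l s - l t ∈ H → s = t)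
    {w : Q} (hw : w ∈ monSpan R y x S) (hw0 : w ≠ 0) : ∃ g ∈ H', Lead (φ w) g := by
  rw [Finsupp.mem_span_image_iff_linearCombination] at hw
  obtain ⟨f, hf, rfl⟩ := hw
  rw [mem_supported] at hf
  have hne : f.support.Nonempty := by
    rw [Finsupp.support_nonempty_iff]
    rintro rfl
    simp at hw0
  have hex : ∀ s : ℕ × ℕ, ∃ g ∈ H, s ∈ f.support → Lead (φ (f s : Q)) g := by
    intro s
    by_cases hs : s ∈ f.support
    · obtain ⟨g, hg, hL⟩ := hR (f s) (f s).2 (by simpa using hs)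
      exact ⟨g, hg, fun _ => hL⟩
    · exact ⟨0, H.zero_mem, fun h => absurd h hs⟩
  choose g hgH hgL using hex
  obtain ⟨s, hs, hL⟩ := Lead.sum f.support hne
    (fun s => φ ((f s : Q) * (y ^ s.1 * x ^ s.2))) (fun s => g s + l s)
    (fun s hs => by rw [map_mul]; exact (hgL s hs).mul (hl s (hf hs)))
    (fun s hs t ht hst heq => hst (hinj s (hf hs) t (hf ht) (by
      have : l s - l t = g t - g s := by
        rw [sub_eq_sub_iff_add_eq_add, add_comm, heq, add_comm]
      rw [this]
      exact H.sub_mem (hgH t) (hgH s))))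
  refine ⟨g s + l s, H'.add_mem (hHH (hgH s)) (hlH s (hf hs)), ?_⟩
  rw [Finsupp.linearCombination_apply, Finsupp.sum, map_sum]
  exact hL

end Step


/-! ### Weighted shifts on a lattice -/

section Shifts

variable {n : ℕ}

/-- The lattice `ℤⁿ × ℤⁿ` with a lexicographic total order; it indexes the monomials of the quantum
torus in which the quotients of the quantized Weyl algebra embed. -/
abbrev Lat (n : ℕ) : Type := Lex (Lex (Fin n → ℤ) × Lex (Fin n → ℤ))

/-- The `k`-th coordinate in the first factor (the exponent of `Y_k`). -/
def alp (k : Fin n) : Lat n →+ ℤ where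
  toFun h := ofLex (ofLex h).1 k
  map_zero' := rfl
  map_add' _ _ := rfl

/-- The `k`-th coordinate in the second factor. -/
def bet (k : Fin n) : Lat n →+ ℤ where
  toFun h := ofLex (ofLex h).2 k
  map_zero' := rfl
  map_add' _ _ := rfl

/-- The exponent of the torus generator `Y_i`. -/
def uu (i : Fin n) : Lat n := toLex (toLex (Pi.single i 1), 0)

/-- The exponent of the torus generator `Z_m`; the first `m` coordinates are `1`, so that
`ze 0 = 0` and `ze` is increasing. -/
def ze (n m : ℕ) : Lat n := toLex (0, toLex fun k : Fin n => if (k : ℕ) < m then 1 else 0)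

lemma alp_uu (k i : Fin n) : alp k (uu i) = if k = i then 1 else 0 := by
  change (Pi.single i 1 : Fin n → ℤ) k = _
  rw [Pi.single_apply]

lemma alp_ze (k : Fin n) (m : ℕ) : alp k (ze n m) = 0 := rfl

lemma bet_uu (k i : Fin n) : bet k (uu i) = 0 := rfl

lemma bet_ze (k : Fin n) (m : ℕ) : bet k (ze n m) = if (k : ℕ) < m then 1 else 0 := rfl

lemma ze_zero : ze n 0 = 0 := by
  simp only [ze, Nat.not_lt_zero, if_false]; rfl

lemma ze_lt (i : Fin n) : ze n (i : ℕ) < ze n ((i : ℕ) + 1) := by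
  rw [ze, ze, Prod.Lex.toLex_lt_toLex]
  refine Or.inr ⟨rfl, Pi.toLex_strictMono ?_⟩
  rw [Pi.lt_def]
  refine ⟨fun k => ?_, i, by simp⟩
  dsimp only
  split_ifs <;> omega

/-- The sublattice of the exponents that involve only the first `j` coordinates. -/
def sub (n j : ℕ) : AddSubgroup (Lat n) where
  carrier := {h | ∀ k : Fin n, j ≤ (k : ℕ) → alp k h = 0 ∧ bet k h = 0}
  zero_mem' k _ := by simp
  add_mem' ha hb k hk := by simp [ha k hk, hb k hk]
  neg_mem' ha k hk := by simp [ha k hk]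

/-- The character `h ↦ ∏ c_k ^ α_k(h)` of the lattice. -/
noncomputable def chi (c : Fin n → ℂˣ) : AddChar (Lat n) ℂ where
  toFun h := ((∏ k, c k ^ alp k h : ℂˣ) : ℂ)
  map_zero_eq_one' := by simp
  map_add_eq_mul' a b := by
    simp only [map_add, zpow_add, Finset.prod_mul_distrib, Units.val_mul]

lemma chi_uu (c : Fin n → ℂˣ) (i : Fin n) : chi c (uu i) = c i := by
  change ((∏ k, c k ^ alp k (uu i) : ℂˣ) : ℂ) = _
  rw [Finset.prod_eq_single i]
  · simp [alp_uu]
  · intro k _ hk; simp [alp_uu, hk]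
  · simp

lemma chi_ze (c : Fin n → ℂˣ) (m : ℕ) : chi c (ze n m) = 1 := by
  change ((∏ k, c k ^ alp k (ze n m) : ℂˣ) : ℂ) = _
  simp [alp_ze]

lemma chi_neg_uu_add_ze (c : Fin n → ℂˣ) (i : Fin n) (m : ℕ) :
    chi c (-uu i + ze n m) = ((c i)⁻¹ : ℂˣ) := by
  rw [AddChar.map_add_eq_mul, AddChar.map_neg_eq_inv, chi_uu, chi_ze]
  simp

/-- The weighted shift `e_h ↦ χ(h) e_{g+h}`. -/
noncomputable def wsh (g : Lat n) (χ : AddChar (Lat n) ℂ) : Op (Lat n) :=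
  Finsupp.linearCombination ℂ (fun h => single (g + h) (χ h))

lemma wsh_single (g : Lat n) (χ : AddChar (Lat n) ℂ) (h : Lat n) :
    wsh g χ (single h 1) = single (g + h) (χ h) := by
  simp [wsh]

lemma wsh_mul (g g' : Lat n) (χ χ' : AddChar (Lat n) ℂ) :
    wsh g χ * wsh g' χ' = χ g' • wsh (g + g') (χ * χ') := by
  refine Finsupp.lhom_ext' fun h => LinearMap.ext_ring ?_
  have h1 : single (g' + h) (χ' h) = χ' h • single (g' + h) (1 : ℂ) := by simp
  change wsh g χ (wsh g' χ' (single h 1)) = χ g' • wsh (g + g') (χ * χ') (single h 1)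
  rw [wsh_single, wsh_single, h1, map_smul, wsh_single, AddChar.map_add_eq_mul, AddChar.mul_apply,
    smul_single, smul_single, add_assoc, smul_eq_mul, smul_eq_mul]
  congr 1
  ring

lemma wsh_comm {g g' : Lat n} {χ χ' : AddChar (Lat n) ℂ} {c : ℂ} (h : χ g' = c * χ' g) :
    wsh g χ * wsh g' χ' = c • (wsh g' χ' * wsh g χ) := by
  rw [wsh_mul, wsh_mul, smul_smul, h, add_comm g, mul_comm χ]

lemma lead_wsh (g : Lat n) (χ : AddChar (Lat n) ℂ) : Lead (wsh g χ) g := by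
  intro h
  refine ⟨χ h, ?_, by rw [wsh_single]; simp⟩
  intro h0
  have := AddChar.map_add_eq_mul χ h (-h)
  simp [h0] at this

lemma wsh_zero_one : wsh (0 : Lat n) 1 = 1 := by
  refine Finsupp.lhom_ext' fun h => LinearMap.ext_ring ?_
  change wsh (0 : Lat n) 1 (single h 1) = single h 1
  rw [wsh_single]
  simp

end Shifts

/-! ### The relations and their realisation by weighted shifts -/

section Relations

variable {n : ℕ} {Q : Type} [Semiring Q] [Algebra ℂ Q]

/-- The element `z_m = 1 + ∑_{k < m} y_k x_k` for arbitrary families `y`, `x`. -/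
def zz (y x : Fin n → Q) (m : ℕ) : Q :=
  1 + ∑ k ∈ Finset.univ.filter (fun k : Fin n => (k : ℕ) < m), y k * x k

lemma zz_zero (y x : Fin n → Q) : zz y x 0 = 1 := by simp [zz]

lemma zz_succ (y x : Fin n → Q) (i : Fin n) :
    zz y x ((i : ℕ) + 1) = zz y x (i : ℕ) + y i * x i := by
  have : Finset.univ.filter (fun k : Fin n => (k : ℕ) < (i : ℕ) + 1) =
      insert i (Finset.univ.filter (fun k : Fin n => (k : ℕ) < (i : ℕ))) := by
    ext k
    simp only [Finset.mem_filter, Finset.mem_univ, true_and, Finset.mem_insert, Fin.ext_iff]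
    omega
  rw [zz, this, Finset.sum_insert (by simp), zz]
  abel

/-- The families `y`, `x` satisfy the defining relations of the quantized Weyl algebra. -/
structure WeylFam (q : Fin n → ℂ) (lam : Fin n → Fin n → ℂ) (y x : Fin n → Q) : Prop where
  yy : ∀ i j, i < j → y j * y i = lam j i • (y i * y j)
  yx : ∀ i j, i < j → y j * x i = lam i j • (x i * y j)
  xy : ∀ i j, i < j → x j * y i = (q i * lam i j) • (y i * x j)
  xx : ∀ i j, i < j → x j * x i = ((q i)⁻¹ * (lam i j)⁻¹) • (x i * x j)
  weyl : ∀ i, x i * y i = q i • (y i * x i) + (q i - 1) • zz y x (i : ℕ)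

variable (q : Fin n → ℂˣ) (lam : Fin n → Fin n → ℂˣ)

/-- The character of the torus generator `Y_i`. -/
noncomputable def chY (i : Fin n) : AddChar (Lat n) ℂ :=
  chi (fun k => if k < i then lam i k else 1)

/-- The character of the torus generator `Z_m`. -/
noncomputable def chZ (m : ℕ) : AddChar (Lat n) ℂ :=
  chi (fun k => if (k : ℕ) < m then q k else 1)

/-- The torus element `Y_i⁻¹ Z_m`. -/
noncomputable def opYZ (i : Fin n) (m : ℕ) : Op (Lat n) :=
  wsh (-uu i + ze n m) (chZ q m * (chY lam i)⁻¹)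

/-- The image of `y_i`: the torus generator `Y_i` scaled by `e_i`. -/
noncomputable def opY (e : Fin n → ℂ) (i : Fin n) : Op (Lat n) := e i • wsh (uu i) (chY lam i)

/-- The image of `x_i`: the torus element `Y_i⁻¹ (a_i Z_i - b_i Z_{i-1})` (with one-based indices
of the torus generators). -/
noncomputable def opX (a b : Fin n → ℂ) (i : Fin n) : Op (Lat n) :=
  a i • opYZ q lam i ((i : ℕ) + 1) + (-b i) • opYZ q lam i (i : ℕ)

variable {q lam}

lemma chY_uu_lt {i j : Fin n} (h : i < j) : chY lam j (uu i) = lam j i := by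
  simp [chY, chi_uu, h]

lemma chY_uu_ge {i j : Fin n} (h : i ≤ j) : chY lam i (uu j) = 1 := by
  simp [chY, chi_uu, not_lt.mpr h]

lemma chY_nu_lt {i j : Fin n} (h : i < j) (m : ℕ) :
    chY lam j (-uu i + ze n m) = ((lam j i)⁻¹ : ℂˣ) := by
  rw [chY, chi_neg_uu_add_ze, if_pos h]

lemma chY_nu_ge {i j : Fin n} (h : i ≤ j) (m : ℕ) : chY lam i (-uu j + ze n m) = 1 := by
  rw [chY, chi_neg_uu_add_ze, if_neg (not_lt.mpr h)]; simp

lemma chZ_uu_lt {i : Fin n} {m : ℕ} (h : (i : ℕ) < m) : chZ q m (uu i) = q i := by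
  simp [chZ, chi_uu, h]

lemma chZ_uu_ge {i : Fin n} {m : ℕ} (h : m ≤ (i : ℕ)) : chZ q m (uu i) = 1 := by
  simp [chZ, chi_uu, not_lt.mpr h]

lemma chZ_nu_lt {i : Fin n} {m : ℕ} (h : (i : ℕ) < m) (m' : ℕ) :
    chZ q m (-uu i + ze n m') = ((q i)⁻¹ : ℂˣ) := by
  rw [chZ, chi_neg_uu_add_ze, if_pos h]

lemma chZ_nu_ge {i : Fin n} {m : ℕ} (h : m ≤ (i : ℕ)) (m' : ℕ) :
    chZ q m (-uu i + ze n m') = 1 := by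
  rw [chZ, chi_neg_uu_add_ze, if_neg (not_lt.mpr h)]; simp

lemma Y_mul_YZ (i : Fin n) (m : ℕ) :
    wsh (uu i) (chY lam i) * opYZ q lam i m = wsh (ze n m) (chZ q m) := by
  rw [opYZ, wsh_mul, chY_nu_ge le_rfl, one_smul, add_neg_cancel_left, mul_comm (chZ q m),
    mul_inv_cancel_left]

lemma YZ_mul_Y (i : Fin n) (m : ℕ) :
    opYZ q lam i m * wsh (uu i) (chY lam i) = chZ q m (uu i) • wsh (ze n m) (chZ q m) := by
  rw [opYZ, wsh_mul, AddChar.mul_apply, AddChar.inv_apply', chY_uu_ge le_rfl, inv_one, mul_one,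
    inv_mul_cancel_right]
  congr 2
  abel

variable {e a b : Fin n → ℂ} {δ : ℕ → ℂ}

lemma opY_mul_opX (ha : ∀ i : Fin n, e i * a i = δ ((i : ℕ) + 1))
    (hb : ∀ i : Fin n, e i * b i = δ (i : ℕ)) (i : Fin n) :
    opY lam e i * opX q lam a b i = δ ((i : ℕ) + 1) • wsh (ze n ((i : ℕ) + 1)) (chZ q ((i : ℕ) + 1))
      + (-δ (i : ℕ)) • wsh (ze n (i : ℕ)) (chZ q (i : ℕ)) := by
  rw [opY, opX, mul_add, smul_mul_smul_comm, smul_mul_smul_comm, Y_mul_YZ, Y_mul_YZ, mul_neg, ha, hb]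

lemma zz_op (hδ : δ 0 = 1) (ha : ∀ i : Fin n, e i * a i = δ ((i : ℕ) + 1))
    (hb : ∀ i : Fin n, e i * b i = δ (i : ℕ)) (m : ℕ) (hm : m ≤ n) :
    zz (opY lam e) (opX q lam a b) m = δ m • wsh (ze n m) (chZ q m) := by
  induction m with
  | zero =>
    have : chZ q 0 = 1 := by
      ext h
      change ((∏ k : Fin n, (if (k : ℕ) < 0 then q k else 1) ^ alp k h : ℂˣ) : ℂ) = 1
      simp
    rw [zz_zero, hδ, ze_zero, this, wsh_zero_one, one_smul]
  | succ m ih =>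
    have h1 := zz_succ (opY lam e) (opX q lam a b) ⟨m, hm⟩
    have h2 := opY_mul_opX (lam := lam) (q := q) ha hb ⟨m, hm⟩
    simp only at h1 h2
    rw [h1, h2, ih (by omega)]
    module

/-- The operators satisfy the Weyl relations as soon as the scalars are compatible, in the sense that
`y_i x_i` telescopes to `δ_i Z_i - δ_{i-1} Z_{i-1}`. -/
theorem weylFam_op (hlam : ∀ i j, lam i j * lam j i = 1) (hδ : δ 0 = 1)
    (ha : ∀ i : Fin n, e i * a i = δ ((i : ℕ) + 1)) (hb : ∀ i : Fin n, e i * b i = δ (i : ℕ)) :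
    WeylFam (fun i => (q i : ℂ)) (fun i j => (lam i j : ℂ)) (opY lam e) (opX q lam a b) := by
  have hinv : ∀ i j, (lam j i)⁻¹ = lam i j := fun i j => inv_eq_of_mul_eq_one_left (hlam i j)
  constructor
  · intro i j h
    simp only [opY, smul_mul_smul_comm]
    rw [wsh_comm (c := lam j i) (by rw [chY_uu_lt h, chY_uu_ge h.le, mul_one])]
    module
  · intro i j h
    have key : ∀ m ≤ (i : ℕ) + 1, wsh (uu j) (chY lam j) * opYZ q lam i m =
        (lam i j : ℂ) • (opYZ q lam i m * wsh (uu j) (chY lam j)) := by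
      intro m hm
      refine wsh_comm ?_
      rw [chY_nu_lt h, hinv, AddChar.mul_apply, AddChar.inv_apply', chY_uu_ge h.le,
        chZ_uu_ge (by have : (i : ℕ) < j := h; omega)]
      simp
    simp only [opY, opX, mul_add, add_mul, smul_mul_smul_comm, key _ le_rfl, key _ (Nat.le_succ _)]
    module
  · intro i j h
    have key : ∀ m ≥ (j : ℕ), opYZ q lam j m * wsh (uu i) (chY lam i) =
        (q i * lam i j : ℂ) • (wsh (uu i) (chY lam i) * opYZ q lam j m) := by
      intro m hm
      refine wsh_comm ?_
      rw [chY_nu_ge h.le, AddChar.mul_apply, AddChar.inv_apply', chY_uu_lt h,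
        chZ_uu_lt (by have : (i : ℕ) < j := h; omega), ← Units.val_inv_eq_inv_val, hinv]
      simp
    simp only [opY, opX, mul_add, add_mul, smul_mul_smul_comm, key _ le_rfl, key _ (Nat.le_succ _)]
    module
  · intro i j h
    have key : ∀ m ≥ (j : ℕ), ∀ m' ≤ (i : ℕ) + 1, opYZ q lam j m * opYZ q lam i m' =
        ((q i : ℂ)⁻¹ * (lam i j : ℂ)⁻¹) • (opYZ q lam i m' * opYZ q lam j m) := by
      intro m hm m' hm'
      have hij : (i : ℕ) < j := h
      refine wsh_comm ?_
      rw [AddChar.mul_apply, AddChar.mul_apply, AddChar.inv_apply', AddChar.inv_apply',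
        chZ_nu_lt (by omega), chY_nu_lt h, chZ_nu_ge (by omega), chY_nu_ge h.le, hinv]
      simp
    simp only [opX, mul_add, add_mul, smul_mul_smul_comm,
      key _ le_rfl _ le_rfl, key _ (Nat.le_succ _) _ le_rfl,
      key _ le_rfl _ (Nat.le_succ _), key _ (Nat.le_succ _) _ (Nat.le_succ _)]
    module
  · intro i
    rw [zz_op hδ ha hb _ i.2.le, opY_mul_opX ha hb]
    rw [opY, opX, add_mul, smul_mul_smul_comm, smul_mul_smul_comm, YZ_mul_Y, YZ_mul_Y,
      chZ_uu_lt (Nat.lt_succ_self _), chZ_uu_ge le_rfl, mul_comm (a i), neg_mul, mul_comm (b i), ha,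
      hb]
    module

end Relations


/-! ### Nonzero elements of the quotient act with a leading shift -/

section Main

variable {n : ℕ} {Q : Type} [Ring Q] [Algebra ℂ Q]

/-- The generators with index `< j`. -/
def gens (y x : Fin n → Q) (j : ℕ) : Set Q :=
  {w | ∃ i : Fin n, (i : ℕ) < j ∧ (w = y i ∨ w = x i)}

lemma gens_succ (y x : Fin n → Q) (i : Fin n) :
    gens y x ((i : ℕ) + 1) = gens y x (i : ℕ) ∪ {y i, x i} := by
  ext w
  simp only [gens, Set.mem_ofPred_eq, Set.mem_union, Set.mem_insert_iff, Set.mem_singleton_iff]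
  constructor
  · rintro ⟨k, hk, h⟩
    rcases Nat.lt_succ_iff_lt_or_eq.mp hk with h1 | h1
    · exact Or.inl ⟨k, h1, h⟩
    · obtain rfl := Fin.ext h1
      exact Or.inr h
  · rintro (⟨k, hk, h⟩ | h)
    · exact ⟨k, by omega, h⟩
    · exact ⟨i, by omega, h⟩

lemma zz_mem (y x : Fin n → Q) (m : ℕ) : zz y x m ∈ Algebra.adjoin ℂ (gens y x m) := by
  refine add_mem (one_mem _) (sum_mem fun k hk => ?_)
  have hk' : (k : ℕ) < m := by simpa using hk
  exact mul_mem (Algebra.subset_adjoin ⟨k, hk', Or.inl rfl⟩)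
    (Algebra.subset_adjoin ⟨k, hk', Or.inr rfl⟩)

section Closure

variable {R : Subalgebra ℂ Q} {y x z : Q} {q : ℂ}

lemma closure_free (hz : z ∈ R) (hxy : x * y = q • (y * x) + (q - 1) • z) (hzy : z * y = y * z)
    (s : ℕ × ℕ) : y * (y ^ s.1 * x ^ s.2) ∈ monSpan R y x Set.univ ∧
      x * (y ^ s.1 * x ^ s.2) ∈ monSpan R y x Set.univ := by
  obtain ⟨a, b⟩ := s
  refine ⟨?_, ?_⟩
  · rw [← mul_assoc, ← pow_succ']
    exact mon_mem_monSpan R y x (Set.mem_univ (a + 1, b))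
  · cases a with
    | zero =>
      have := mon_mem_monSpan R y x (Set.mem_univ (0, b + 1))
      simpa [pow_succ'] using this
    | succ a =>
      have h1 := mon_mem_monSpan R y x (Set.mem_univ (a + 1, b + 1))
      have h2 := mon_mem_monSpan R y x (Set.mem_univ (a, b))
      have : x * (y ^ (a + 1) * x ^ b) = q ^ (a + 1) • (y ^ (a + 1) * x ^ (b + 1)) +
          (q ^ (a + 1) - 1) • (z * (y ^ a * x ^ b)) := by
        rw [← mul_assoc, x_mul_y_pow hxy hzy, add_mul, smul_mul_assoc, smul_mul_assoc, mul_assoc,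
          ← pow_succ', mul_assoc z]
      dsimp only
      rw [this]
      exact add_mem (smul_mem_monSpan _ h1) (smul_mem_monSpan _ (mul_mem_monSpan hz h2))

lemma closure_axes (hz : z ∈ R) (hyx : y * x = -z) (hxy : x * y = -z)
    (s : ℕ × ℕ) (hs : s.1 = 0 ∨ s.2 = 0) :
    y * (y ^ s.1 * x ^ s.2) ∈ monSpan R y x {s | s.1 = 0 ∨ s.2 = 0} ∧
      x * (y ^ s.1 * x ^ s.2) ∈ monSpan R y x {s | s.1 = 0 ∨ s.2 = 0} := by
  have hY : ∀ a, y ^ a ∈ monSpan R y x {s | s.1 = 0 ∨ s.2 = 0} := fun a => by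
    simpa using mon_mem_monSpan R y x (S := {s | s.1 = 0 ∨ s.2 = 0}) (a := a) (b := 0) (Or.inr rfl)
  have hX : ∀ b, x ^ b ∈ monSpan R y x {s | s.1 = 0 ∨ s.2 = 0} := fun b => by
    simpa using mon_mem_monSpan R y x (S := {s | s.1 = 0 ∨ s.2 = 0}) (a := 0) (b := b) (Or.inl rfl)
  obtain ⟨a, b⟩ := s
  rcases hs with hs | hs
  · obtain rfl : a = 0 := hs
    simp only [pow_zero, one_mul]
    refine ⟨?_, by rw [← pow_succ']; exact hX _⟩
    cases b with
    | zero => simpa using hY 1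
    | succ b =>
      rw [pow_succ', ← mul_assoc, hyx]
      exact mul_mem_monSpan (neg_mem hz) (hX _)
  · obtain rfl : b = 0 := hs
    simp only [pow_zero, mul_one]
    refine ⟨by rw [← pow_succ']; exact hY _, ?_⟩
    cases a with
    | zero => simpa using hX 1
    | succ a =>
      rw [pow_succ', ← mul_assoc, hxy]
      exact mul_mem_monSpan (neg_mem hz) (hY _)

lemma closure_y_zero (hy : y = 0) (s : ℕ × ℕ) (hs : s.1 = 0) :
    y * (y ^ s.1 * x ^ s.2) ∈ monSpan R y x {s | s.1 = 0} ∧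
      x * (y ^ s.1 * x ^ s.2) ∈ monSpan R y x {s | s.1 = 0} := by
  obtain ⟨a, b⟩ := s
  obtain rfl : a = 0 := hs
  have := mon_mem_monSpan R y x (S := {s | s.1 = 0}) (a := 0) (b := b + 1) rfl
  refine ⟨by simp [hy], by simpa [pow_succ'] using this⟩

lemma closure_x_zero (hx : x = 0) (s : ℕ × ℕ) (hs : s.2 = 0) :
    y * (y ^ s.1 * x ^ s.2) ∈ monSpan R y x {s | s.2 = 0} ∧
      x * (y ^ s.1 * x ^ s.2) ∈ monSpan R y x {s | s.2 = 0} := by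
  obtain ⟨a, b⟩ := s
  obtain rfl : b = 0 := hs
  have := mon_mem_monSpan R y x (S := {s | s.2 = 0}) (a := a + 1) (b := 0) rfl
  refine ⟨by simpa [pow_succ'] using this, by simp [hx]⟩

lemma closure_zero (hy : y = 0) (hx : x = 0) (s : ℕ × ℕ) :
    y * (y ^ s.1 * x ^ s.2) ∈ monSpan R y x {(0, 0)} ∧
      x * (y ^ s.1 * x ^ s.2) ∈ monSpan R y x {(0, 0)} := by
  simp [hy, hx]

end Closure

variable {q : Fin n → ℂ} {lam : Fin n → Fin n → ℂ} {y x : Fin n → Q}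

lemma WeylFam.normal (hW : WeylFam q lam y x) (i : Fin n) :
    (∀ w ∈ Algebra.adjoin ℂ (gens y x (i : ℕ)),
      ∃ w' ∈ Algebra.adjoin ℂ (gens y x (i : ℕ)), y i * w = w' * y i) ∧
    (∀ w ∈ Algebra.adjoin ℂ (gens y x (i : ℕ)),
      ∃ w' ∈ Algebra.adjoin ℂ (gens y x (i : ℕ)), x i * w = w' * x i) := by
  refine ⟨fun w hw => exists_mul_comm_adjoin ?_ hw, fun w hw => exists_mul_comm_adjoin ?_ hw⟩
  · rintro s ⟨k, hk, rfl | rfl⟩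
    · exact ⟨_, hW.yy k i hk⟩
    · exact ⟨_, hW.yx k i hk⟩
  · rintro s ⟨k, hk, rfl | rfl⟩
    · exact ⟨_, hW.xy k i hk⟩
    · exact ⟨_, hW.xx k i hk⟩

lemma WeylFam.zz_mul_y (hW : WeylFam q lam y x) (hlam : ∀ i j, lam i j * lam j i = 1) (i : Fin n) :
    zz y x (i : ℕ) * y i = y i * zz y x (i : ℕ) := by
  rw [zz, add_mul, mul_add, one_mul, mul_one, Finset.sum_mul, Finset.mul_sum]
  congr 1
  refine Finset.sum_congr rfl fun k hk => ?_
  have hk' : k < i := by simpa using hk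
  rw [← mul_assoc (y i), hW.yy k i hk', smul_mul_assoc, mul_assoc (y k) (y i), hW.yx k i hk',
    mul_smul_comm, smul_smul, hlam, one_smul, mul_assoc]

/-- The leading exponent attached to the monomial `y_i^a x_i^b`, where `x_i` has leading term
`Y_i⁻¹ Z_m`. -/
def ld (i : Fin n) (m : ℕ) (s : ℕ × ℕ) : Lat n := s.1 • uu i + s.2 • (-uu i + ze n m)

lemma alp_ld (k i : Fin n) (m : ℕ) (s : ℕ × ℕ) :
    alp k (ld i m s) = if k = i then (s.1 : ℤ) - s.2 else 0 := by
  simp only [ld, map_add, map_nsmul, map_neg, alp_uu, alp_ze]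
  split_ifs <;> simp [sub_eq_add_neg]

lemma bet_ld (k i : Fin n) (m : ℕ) (s : ℕ × ℕ) :
    bet k (ld i m s) = if (k : ℕ) < m then (s.2 : ℤ) else 0 := by
  simp only [ld, map_add, map_nsmul, map_neg, bet_uu, bet_ze]
  split_ifs <;> simp

/-- The passage from index `i` to index `i + 1`, for a set `S` of exponents whose monomials span
over the previous algebra. The leading exponents are distinct modulo the previous sublattice if
`m = i + 1`, or if `S` lies on the two axes. -/
lemma index_step (φ : Q →ₐ[ℂ] Op (Lat n)) (hW : WeylFam q lam y x) (i : Fin n) (m : ℕ)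
    (S : Set (ℕ × ℕ)) (h0 : (0, 0) ∈ S)
    (hS : ∀ s ∈ S, y i * (y i ^ s.1 * x i ^ s.2) ∈
        monSpan (Algebra.adjoin ℂ (gens y x (i : ℕ))) (y i) (x i) S ∧
      x i * (y i ^ s.1 * x i ^ s.2) ∈
        monSpan (Algebra.adjoin ℂ (gens y x (i : ℕ))) (y i) (x i) S)
    (hm : m ≤ (i : ℕ) + 1) (hSm : m = (i : ℕ) + 1 ∨ ∀ s ∈ S, s.1 = 0 ∨ s.2 = 0)
    (hLy : Lead (φ (y i)) (uu i) ∨ ∀ s ∈ S, s.1 = 0)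
    (hLx : Lead (φ (x i)) (-uu i + ze n m) ∨ ∀ s ∈ S, s.2 = 0)
    (ih : ∀ w ∈ Algebra.adjoin ℂ (gens y x (i : ℕ)), w ≠ 0 → ∃ g ∈ sub n (i : ℕ), Lead (φ w) g) :
    ∀ w ∈ Algebra.adjoin ℂ (gens y x ((i : ℕ) + 1)), w ≠ 0 →
      ∃ g ∈ sub n ((i : ℕ) + 1), Lead (φ w) g := by
  intro w hw hw0
  rw [gens_succ] at hw
  have hspan := mem_monSpan_of_mem_adjoin h0 (hW.normal i).1 (hW.normal i).2
    (fun s hs => (hS s hs).1) (fun s hs => (hS s hs).2) hw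
  refine lead_step φ (sub n i) (sub n (i + 1)) ?_ (ld i m) ih ?_ ?_ ?_ hspan hw0
  · intro h hh k hk
    exact hh k (by omega)
  · intro s hs
    rw [map_mul, map_pow, map_pow]
    refine Lead.mul ?_ ?_
    · rcases hLy with h | h
      · exact h.pow _
      · rw [h s hs, pow_zero, zero_smul]; exact Lead.one
    · rcases hLx with h | h
      · exact h.pow _
      · rw [h s hs, pow_zero, zero_smul]; exact Lead.one
  · intro s _ k hk
    rw [alp_ld, bet_ld, if_neg (by rintro rfl; omega), if_neg (by omega)]
    exact ⟨rfl, rfl⟩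
  · intro s hs t ht hst
    obtain ⟨h1, h2⟩ := hst i le_rfl
    rw [map_sub, alp_ld, alp_ld, if_pos rfl, if_pos rfl] at h1
    rw [map_sub, bet_ld, bet_ld] at h2
    rcases hSm with rfl | hax
    · rw [if_pos (Nat.lt_succ_self _), if_pos (Nat.lt_succ_self _)] at h2
      exact Prod.ext (by omega) (by omega)
    · have := hax s hs
      have := hax t ht
      exact Prod.ext (by omega) (by omega)

end Main

section Admissible

open Classical in
/-- The scalar `1` outside a condition and `0` on it. -/
noncomputable def off (p : Prop) : ℂ := if p then 0 else 1

lemma off_pos {p : Prop} (h : p) : off p = 0 := if_pos h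

lemma off_neg {p : Prop} (h : ¬ p) : off p = 1 := if_neg h

variable {n : ℕ} {Q : Type} [Ring Q] [Algebra ℂ Q]
  (q : Fin n → ℂˣ) (lam : Fin n → Fin n → ℂˣ) (Tz : Set ℕ) (Ty Tx : Set (Fin n))

/-- The image of `y_i` in the torus attached to the admissible set `(Tz, Ty, Tx)`. -/
noncomputable def repY : Fin n → Op (Lat n) := opY lam (fun i => off (i ∈ Ty))

/-- The image of `x_i` in the torus attached to the admissible set `(Tz, Ty, Tx)`. Outside the
admissible set it is `Y_i⁻¹ (z_i - z_{i-1})`, where `z_m` stands for `0` if it belongs to the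
admissible set and for `Z_m` otherwise; if `y_i`, but not `x_i`, lies in the admissible set, then
it is the torus monomial `Y_i⁻¹ Z_i`. -/
noncomputable def repX : Fin n → Op (Lat n) :=
  opX q lam (fun i => off ((i : ℕ) + 1 ∈ Tz ∧ (i ∈ Ty → i ∈ Tx))) (fun i => off ((i : ℕ) ∈ Tz))

variable {q lam Tz Ty Tx}

/-- Admissibility, in the form in which it enters the proof: `y_i` or `x_i` lies in the set exactly
if both `z_{i-1}` and `z_i` do, also for the first index, because `z_0 = 1` is never in the set. -/
structure Adm (Tz : Set ℕ) (Ty Tx : Set (Fin n)) : Prop where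
  zero : 0 ∉ Tz
  iff : ∀ i : Fin n, (i ∈ Ty ∨ i ∈ Tx) ↔ ((i : ℕ) + 1 ∈ Tz ∧ (i : ℕ) ∈ Tz)
  le : ∀ m ∈ Tz, m ≤ n

lemma Adm.scalar_a (hA : Adm Tz Ty Tx) (i : Fin n) :
    off (i ∈ Ty) * off ((i : ℕ) + 1 ∈ Tz ∧ (i ∈ Ty → i ∈ Tx)) = off ((i : ℕ) + 1 ∈ Tz) := by
  have := hA.iff i
  unfold off
  split_ifs <;> first | (exfalso; tauto) | simp

lemma Adm.scalar_b (hA : Adm Tz Ty Tx) (i : Fin n) :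
    off (i ∈ Ty) * off ((i : ℕ) ∈ Tz) = off ((i : ℕ) ∈ Tz) := by
  have := hA.iff i
  unfold off
  split_ifs <;> first | (exfalso; tauto) | simp

lemma Adm.weylFam_rep (hA : Adm Tz Ty Tx) (hlam : ∀ i j, lam i j * lam j i = 1) :
    WeylFam (fun i => (q i : ℂ)) (fun i j => (lam i j : ℂ)) (repY lam Ty) (repX q lam Tz Ty Tx) :=
  weylFam_op (δ := fun m => off (m ∈ Tz)) hlam (off_neg hA.zero) hA.scalar_a hA.scalar_b

lemma Adm.rep_zz (hA : Adm Tz Ty Tx) {m : ℕ} (hm : m ∈ Tz) :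
    zz (repY lam Ty) (repX q lam Tz Ty Tx) m = 0 := by
  have := zz_op (q := q) (lam := lam) (δ := fun m => off (m ∈ Tz)) (off_neg hA.zero) hA.scalar_a
    hA.scalar_b m (hA.le m hm)
  rw [off_pos hm, zero_smul] at this
  exact this

lemma rep_y {i : Fin n} (hi : i ∈ Ty) : repY lam Ty i = 0 := by
  simp [repY, opY, off_pos hi]

lemma Adm.rep_x (hA : Adm Tz Ty Tx) {i : Fin n} (hi : i ∈ Tx) : repX q lam Tz Ty Tx i = 0 := by
  have h := (hA.iff i).mp (Or.inr hi)
  rw [repX, opX, off_pos ⟨h.1, fun _ => hi⟩, off_pos h.2, neg_zero, zero_smul, zero_smul, add_zero]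

lemma lead_rep_y {i : Fin n} (hi : i ∉ Ty) : Lead (repY lam Ty i) (uu i) := by
  simp only [repY, opY, off_neg hi, one_smul]
  exact lead_wsh _ _

lemma lead_rep_x_top {i : Fin n} (hi : ¬ ((i : ℕ) + 1 ∈ Tz ∧ (i ∈ Ty → i ∈ Tx))) :
    Lead (repX q lam Tz Ty Tx i) (-uu i + ze n ((i : ℕ) + 1)) := by
  simp only [repX, opX, off_neg hi, one_smul]
  by_cases h : (i : ℕ) ∈ Tz
  · rw [off_pos h, neg_zero, zero_smul, add_zero]
    exact lead_wsh _ _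
  · rw [off_neg h]
    exact (lead_wsh _ _).add_of_lt ((lead_wsh _ _).smul (by simp)) (by simpa using ze_lt i)

lemma lead_rep_x_low {i : Fin n} (hi : (i : ℕ) + 1 ∈ Tz ∧ (i ∈ Ty → i ∈ Tx)) (hi' : (i : ℕ) ∉ Tz) :
    Lead (repX q lam Tz Ty Tx i) (-uu i + ze n (i : ℕ)) := by
  simp only [repX, opX, off_pos hi, off_neg hi', zero_smul, zero_add]
  exact (lead_wsh _ _).smul (by simp)

/-- In an algebra generated by elements satisfying the Weyl relations and killing an admissible
set, each nonzero element acts on the torus module with a leading shift. -/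
theorem lead_of_ne_zero (hA : Adm Tz Ty Tx) (hlam : ∀ i j, lam i j * lam j i = 1)
    {y x : Fin n → Q} (hW : WeylFam (fun i => (q i : ℂ)) (fun i j => (lam i j : ℂ)) y x)
    (hz : ∀ m ∈ Tz, zz y x m = 0) (hy : ∀ i ∈ Ty, y i = 0) (hx : ∀ i ∈ Tx, x i = 0)
    (hgen : ∀ w : Q, w ∈ Algebra.adjoin ℂ (gens y x n))
    (φ : Q →ₐ[ℂ] Op (Lat n)) (hφy : ∀ i, φ (y i) = repY lam Ty i)
    (hφx : ∀ i, φ (x i) = repX q lam Tz Ty Tx i) (w : Q) (hw : w ≠ 0) :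
    ∃ g, Lead (φ w) g := by
  have hlam' : ∀ i j, (lam i j : ℂ) * (lam j i : ℂ) = 1 := fun i j => by
    rw [← Units.val_mul, hlam, Units.val_one]
  suffices h : ∀ j ≤ n, ∀ w ∈ Algebra.adjoin ℂ (gens y x j), w ≠ 0 →
      ∃ g ∈ sub n j, Lead (φ w) g by
    obtain ⟨g, -, hg⟩ := h n le_rfl w (hgen w) hw
    exact ⟨g, hg⟩
  intro j
  induction j with
  | zero =>
    intro _ w hw hw0
    have h0 : gens y x 0 = ∅ := by ext; simp [gens]
    rw [h0, Algebra.adjoin_empty, Algebra.mem_bot] at hw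
    obtain ⟨c, rfl⟩ := hw
    refine ⟨0, AddSubgroup.zero_mem _, ?_⟩
    rw [AlgHom.commutes, Algebra.algebraMap_eq_smul_one]
    exact Lead.one.smul (by rintro rfl; simp at hw0)
  | succ j ih =>
    intro hj
    have ih := ih (by omega)
    obtain ⟨i, rfl⟩ : ∃ i : Fin n, (i : ℕ) = j := ⟨⟨j, hj⟩, rfl⟩
    have hiff := hA.iff i
    by_cases h1 : (i : ℕ) + 1 ∈ Tz
    · have hzi : zz y x (i : ℕ) + y i * x i = 0 := by rw [← zz_succ]; exact hz _ h1
      by_cases h2 : i ∈ Ty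
      · by_cases h3 : i ∈ Tx
        · exact index_step φ hW i i {(0, 0)} rfl (fun s _ => closure_zero (hy i h2) (hx i h3) s)
            (by omega) (Or.inr (by simp)) (Or.inr (by simp)) (Or.inr (by simp)) ih
        · refine index_step φ hW i (i + 1) {s | s.1 = 0} rfl
            (fun s hs => closure_y_zero (hy i h2) s hs)
            le_rfl (Or.inl rfl) (Or.inr fun s hs => hs) (Or.inl ?_) ih
          rw [hφx]
          exact lead_rep_x_top (by tauto)
      · by_cases h3 : i ∈ Tx
        · refine index_step φ hW i i {s | s.2 = 0} rfl
            (fun s hs => closure_x_zero (hx i h3) s hs)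
            (by omega) (Or.inr fun s hs => Or.inr hs) (Or.inl ?_) (Or.inr fun s hs => hs) ih
          rw [hφy]
          exact lead_rep_y h2
        · have hyx : y i * x i = -zz y x (i : ℕ) := (neg_eq_of_add_eq_zero_right hzi).symm
          have hxy : x i * y i = -zz y x (i : ℕ) := by
            rw [hW.weyl, hyx]; module
          refine index_step φ hW i i {s | s.1 = 0 ∨ s.2 = 0} (Or.inl rfl)
            (fun s hs => closure_axes (zz_mem y x i) hyx hxy s hs)
            (by omega) (Or.inr fun s hs => hs) (Or.inl ?_) (Or.inl ?_) ih
          · rw [hφy]; exact lead_rep_y h2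
          · rw [hφx]; exact lead_rep_x_low (by tauto) (by tauto)
    · refine index_step φ hW i (i + 1) Set.univ (Set.mem_univ _)
        (fun s _ => closure_free (zz_mem y x i) (hW.weyl i) (hW.zz_mul_y hlam' i) s)
        le_rfl (Or.inl rfl) (Or.inl ?_) (Or.inl ?_) ih
      · rw [hφy]; exact lead_rep_y (by tauto)
      · rw [hφx]; exact lead_rep_x_top (by tauto)

/-- An algebra generated by elements satisfying the Weyl relations and killing an admissible set is
a domain if it maps to the operators attached to this set: leading shifts are additive under
multiplication, so a product of nonzero elements acts by a nonzero operator. -/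
theorem domain_of_rep (hA : Adm Tz Ty Tx) (hlam : ∀ i j, lam i j * lam j i = 1)
    {y x : Fin n → Q} (hW : WeylFam (fun i => (q i : ℂ)) (fun i j => (lam i j : ℂ)) y x)
    (hz : ∀ m ∈ Tz, zz y x m = 0) (hy : ∀ i ∈ Ty, y i = 0) (hx : ∀ i ∈ Tx, x i = 0)
    (hgen : ∀ w : Q, w ∈ Algebra.adjoin ℂ (gens y x n))
    (φ : Q →ₐ[ℂ] Op (Lat n)) (hφy : ∀ i, φ (y i) = repY lam Ty i)
    (hφx : ∀ i, φ (x i) = repX q lam Tz Ty Tx i) :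
    (1 : Q) ≠ 0 ∧ ∀ v w : Q, v * w = 0 → v = 0 ∨ w = 0 := by
  refine ⟨fun h => ?_, fun v w h => ?_⟩
  · have := congrArg φ h
    rw [map_one, map_zero] at this
    exact (Lead.one (Γ := Lat n)).ne_zero this
  · by_contra! hne
    obtain ⟨g, hg⟩ := lead_of_ne_zero hA hlam hW hz hy hx hgen φ hφy hφx v hne.1
    obtain ⟨g', hg'⟩ := lead_of_ne_zero hA hlam hW hz hy hx hgen φ hφy hφx w hne.2
    refine (hg.mul hg').ne_zero ?_
    rw [← map_mul, h, map_zero]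

end Admissible


/-! ### The quantized algebra -/

section Quantum

variable {n : ℕ} {Q E : Type} [Ring Q] [Algebra ℂ Q] [Ring E] [Algebra ℂ E]
  {q : Fin n → ℂ} {lam : Fin n → Fin n → ℂ}

lemma map_zz {Q E : Type} [Semiring Q] [Algebra ℂ Q] [Semiring E] [Algebra ℂ E]
    (f : Q →ₐ[ℂ] E) (y x : Fin n → Q) (m : ℕ) :
    f (zz y x m) = zz (fun i => f (y i)) (fun i => f (x i)) m := by
  simp [zz, map_sum]

lemma WeylFam.map {Q E : Type} [Semiring Q] [Algebra ℂ Q] [Semiring E] [Algebra ℂ E]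
    {y x : Fin n → Q} (hW : WeylFam q lam y x) (f : Q →ₐ[ℂ] E) :
    WeylFam q lam (fun i => f (y i)) (fun i => f (x i)) where
  yy i j h := by rw [← map_mul, hW.yy i j h, map_smul, map_mul]
  yx i j h := by rw [← map_mul, hW.yx i j h, map_smul, map_mul]
  xy i j h := by rw [← map_mul, hW.xy i j h, map_smul, map_mul]
  xx i j h := by rw [← map_mul, hW.xx i j h, map_smul, map_mul]
  weyl i := by rw [← map_mul, hW.weyl i, map_add, map_smul, map_smul, map_mul, map_zz]

lemma Iio_eq_filter (i : Fin n) :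
    Finset.Iio i = Finset.univ.filter (fun k : Fin n => (k : ℕ) < (i : ℕ)) := by
  ext k; simp

lemma weylFam_Aq : WeylFam q lam (Yq n q lam) (Xq n q lam) where
  yy i j h := by
    have := RingQuot.mkAlgHom_rel ℂ (AqRel.yy (q := q) (lam := lam) i j h)
    simp only [map_mul, map_smul] at this
    exact this
  yx i j h := by
    have := RingQuot.mkAlgHom_rel ℂ (AqRel.yx (q := q) (lam := lam) i j h)
    simp only [map_mul, map_smul] at this
    exact this
  xy i j h := by
    have := RingQuot.mkAlgHom_rel ℂ (AqRel.xy (q := q) (lam := lam) i j h)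
    simp only [map_mul, map_smul] at this
    exact this
  xx i j h := by
    have := RingQuot.mkAlgHom_rel ℂ (AqRel.xx (q := q) (lam := lam) i j h)
    simp only [map_mul, map_smul] at this
    exact this
  weyl i := by
    have := RingQuot.mkAlgHom_rel ℂ (AqRel.weyl (q := q) (lam := lam) i)
    simp only [map_sub, map_mul, map_smul, map_add, map_one, map_sum, Iio_eq_filter] at this
    exact sub_eq_iff_eq_add'.mp this

/-- The homomorphism out of the quantized Weyl algebra given by a family that satisfies the
defining relations. -/
noncomputable def liftAq {y x : Fin n → E} (hW : WeylFam q lam y x) :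
    RingQuot (AqRel n q lam) →ₐ[ℂ] E :=
  RingQuot.liftAlgHom ℂ ⟨FreeAlgebra.lift ℂ (Sum.elim y x), by
    intro u v h
    induction h with
    | yy i j h => simpa using hW.yy i j h
    | yx i j h => simpa using hW.yx i j h
    | xy i j h => simpa using hW.xy i j h
    | xx i j h => simpa using hW.xx i j h
    | weyl i =>
      simp only [map_sub, map_mul, map_smul, map_add, map_one, map_sum, Iio_eq_filter,
        FreeAlgebra.lift_ι_apply, Sum.elim_inl, Sum.elim_inr]
      exact sub_eq_iff_eq_add'.mpr (hW.weyl i)⟩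

lemma liftAq_Y {y x : Fin n → E} (hW : WeylFam q lam y x) (i : Fin n) :
    liftAq hW (Yq n q lam i) = y i := by
  simp [liftAq, Yq]

lemma liftAq_X {y x : Fin n → E} (hW : WeylFam q lam y x) (i : Fin n) :
    liftAq hW (Xq n q lam i) = x i := by
  simp [liftAq, Xq]

lemma gens_top (y x : Fin n → Q) : gens y x n = Set.range (Sum.elim y x) := by
  ext w
  simp only [gens, Set.mem_ofPred_eq, Set.mem_range, Sum.exists, Sum.elim_inl, Sum.elim_inr]
  constructor
  · rintro ⟨i, -, rfl | rfl⟩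
    · exact Or.inl ⟨i, rfl⟩
    · exact Or.inr ⟨i, rfl⟩
  · rintro (⟨i, rfl⟩ | ⟨i, rfl⟩)
    · exact ⟨i, i.2, Or.inl rfl⟩
    · exact ⟨i, i.2, Or.inr rfl⟩

/-- Generation passes to quotients. -/
lemma gens_of_surjective {P : Type} [Ring P] [Algebra ℂ P] (g : Fin n ⊕ Fin n → P)
    (hg : Algebra.adjoin ℂ (Set.range g) = ⊤) (f : P →ₐ[ℂ] Q) (hf : Function.Surjective f)
    (w : Q) : w ∈ Algebra.adjoin ℂ
      (gens (fun i => f (g (Sum.inl i))) (fun i => f (g (Sum.inr i))) n) := by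
  have h : Set.range (Sum.elim (fun i => f (g (Sum.inl i))) (fun i => f (g (Sum.inr i)))) =
      f '' Set.range g := by
    rw [← Set.range_comp]
    congr 1
    ext s
    cases s <;> rfl
  rw [gens_top, h, ← AlgHom.map_adjoin, hg, Algebra.map_top, (AlgHom.range_eq_top f).mpr hf]
  trivial

lemma subset_tsSpan {R : Type} [Ring R] (S : Set R) : S ⊆ (tsSpan S : Set R) := by
  intro s hs
  rw [SetLike.mem_coe, tsSpan, TwoSidedIdeal.mem_sInf]
  exact fun J hJ => hJ hs

lemma tsSpan_le {R : Type} [Ring R] {S : Set R} {J : TwoSidedIdeal R} (h : S ⊆ (J : Set R)) :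
    tsSpan S ≤ J :=
  sInf_le h

/-- The two-sided ideal generated by an admissible set of the quantized Weyl algebra is completely
prime. -/
theorem quantum_part {q : Fin n → ℂˣ} {lam : Fin n → Fin n → ℂˣ} {Tz : Set ℕ}
    {Ty Tx : Set (Fin n)} (hA : Adm Tz Ty Tx) (hlam : ∀ i j, lam i j * lam j i = 1)
    (I : TwoSidedIdeal (RingQuot (AqRel n (fun i => (q i : ℂ)) (fun i j => (lam i j : ℂ)))))
    (hI : I = tsSpan {p | (∃ m ∈ Tz, p = Zq n (fun i => (q i : ℂ)) (fun i j => (lam i j : ℂ)) m) ∨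
      (∃ i ∈ Ty, p = Yq n (fun i => (q i : ℂ)) (fun i j => (lam i j : ℂ)) i) ∨
      (∃ i ∈ Tx, p = Xq n (fun i => (q i : ℂ)) (fun i j => (lam i j : ℂ)) i)}) :
    I ≠ ⊤ ∧ ∀ a b, a * b ∈ I → a ∈ I ∨ b ∈ I := by
  have hsub := subset_tsSpan {p | (∃ m ∈ Tz, p = Zq n (fun i => (q i : ℂ))
      (fun i j => (lam i j : ℂ)) m) ∨
      (∃ i ∈ Ty, p = Yq n (fun i => (q i : ℂ)) (fun i j => (lam i j : ℂ)) i) ∨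
      (∃ i ∈ Tx, p = Xq n (fun i => (q i : ℂ)) (fun i j => (lam i j : ℂ)) i)}
  rw [← hI] at hsub
  set π := RingCon.mkₐ ℂ I.ringCon with hπ
  have hπ0 : ∀ a, π a = 0 ↔ a ∈ I := by
    intro a
    rw [TwoSidedIdeal.mem_iff, ← map_zero π]
    exact RingCon.eq _
  let φ₀ := liftAq (E := Op (Lat n)) (hA.weylFam_rep (q := q) hlam)
  have hle : I ≤ TwoSidedIdeal.ker φ₀ := by
    rw [hI]
    refine tsSpan_le ?_
    rintro p (⟨m, hm, rfl⟩ | ⟨i, hi, rfl⟩ | ⟨i, hi, rfl⟩)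
    · rw [SetLike.mem_coe, TwoSidedIdeal.mem_ker]
      have h := map_zz φ₀ (Yq n (fun i => (q i : ℂ)) (fun i j => (lam i j : ℂ)))
        (Xq n (fun i => (q i : ℂ)) (fun i j => (lam i j : ℂ))) m
      simp only [φ₀, liftAq_Y, liftAq_X] at h
      exact h.trans (hA.rep_zz hm)
    · rw [SetLike.mem_coe, TwoSidedIdeal.mem_ker, liftAq_Y]
      exact rep_y hi
    · rw [SetLike.mem_coe, TwoSidedIdeal.mem_ker, liftAq_X]
      exact hA.rep_x hi
  have hker : I.ringCon ≤ RingCon.ker φ₀.toRingHom := by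
    intro u v h
    have h1 : u - v ∈ TwoSidedIdeal.ker φ₀ := hle ((TwoSidedIdeal.rel_iff I u v).mp h)
    rw [TwoSidedIdeal.mem_ker, map_sub, sub_eq_zero] at h1
    exact h1
  have hgen : Algebra.adjoin ℂ (Set.range fun s => RingQuot.mkAlgHom ℂ
      (AqRel n (fun i => (q i : ℂ)) (fun i j => (lam i j : ℂ))) (FreeAlgebra.ι ℂ s)) = ⊤ := by
    have h : (Set.range fun s => RingQuot.mkAlgHom ℂ
      (AqRel n (fun i => (q i : ℂ)) (fun i j => (lam i j : ℂ))) (FreeAlgebra.ι ℂ s)) =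
        RingQuot.mkAlgHom ℂ (AqRel n (fun i => (q i : ℂ)) (fun i j => (lam i j : ℂ))) ''
          Set.range (FreeAlgebra.ι ℂ) := by
      rw [← Set.range_comp]; rfl
    rw [h, ← AlgHom.map_adjoin, FreeAlgebra.adjoin_range_ι, Algebra.map_top,
      AlgHom.range_eq_top]
    exact RingQuot.mkAlgHom_surjective ℂ _
  have hdom := domain_of_rep hA hlam (weylFam_Aq.map π)
    (fun m hm => (map_zz π _ _ m).symm.trans ((hπ0 _).mpr (hsub (Or.inl ⟨m, hm, rfl⟩))))
    (fun i hi => (hπ0 _).mpr (hsub (Or.inr (Or.inl ⟨i, hi, rfl⟩))))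
    (fun i hi => (hπ0 _).mpr (hsub (Or.inr (Or.inr ⟨i, hi, rfl⟩))))
    (gens_of_surjective _ hgen π (RingCon.mkₐ_surjective _))
    (RingCon.liftₐ I.ringCon φ₀ hker)
    (fun i => liftAq_Y _ i) (fun i => liftAq_X _ i)
  refine ⟨?_, fun a b hab => ?_⟩
  · intro htop
    refine hdom.1 ?_
    rw [← map_one π, hπ0, htop]
    trivial
  · rw [← hπ0, map_mul] at hab
    rw [← hπ0, ← hπ0]
    exact hdom.2 _ _ hab

end Quantum

/-! ### The Poisson algebra -/

section Poisson

variable {n : ℕ}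

open scoped IsMulCommutative in
/-- Polynomials can be evaluated at a family of commuting elements of any algebra. -/
lemma exists_algHom_of_comm {σ E : Type} [Ring E] [Algebra ℂ E] (g : σ → E)
    (hcomm : ∀ u ∈ Set.range g, ∀ v ∈ Set.range g, u * v = v * u) :
    ∃ φ : MvPolynomial σ ℂ →ₐ[ℂ] E, ∀ s, φ (MvPolynomial.X s) = g s := by
  have := Algebra.isMulCommutative_adjoin ℂ hcomm
  let f : MvPolynomial σ ℂ →ₐ[ℂ] Algebra.adjoin ℂ (Set.range g) :=
    MvPolynomial.aeval fun s => ⟨g s, Algebra.subset_adjoin ⟨s, rfl⟩⟩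
  refine ⟨(Algebra.adjoin ℂ (Set.range g)).val.comp f, fun s => ?_⟩
  simp [f]

/-- The ideal generated by an admissible set of the commutative polynomial ring is prime: its
quotient is the case `q = 1`, `λ = 1` of the quantized situation. -/
theorem comm_part {Tz : Set ℕ} {Ty Tx : Set (Fin n)} (hA : Adm Tz Ty Tx)
    (I : Ideal (MvPolynomial (Fin n ⊕ Fin n) ℂ))
    (hI : I = Ideal.span {p | (∃ m ∈ Tz, p = zP n m) ∨ (∃ i ∈ Ty, p = yP n i) ∨
      (∃ i ∈ Tx, p = xP n i)}) : I.IsPrime := by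
  have hsub : {p | (∃ m ∈ Tz, p = zP n m) ∨ (∃ i ∈ Ty, p = yP n i) ∨
      (∃ i ∈ Tx, p = xP n i)} ⊆ (I : Set (MvPolynomial (Fin n ⊕ Fin n) ℂ)) := by
    rw [hI]; exact Ideal.subset_span
  have hF := hA.weylFam_rep (q := fun _ : Fin n => 1) (lam := fun _ _ => 1) (by simp)
  set Y := repY (fun _ _ : Fin n => 1) Ty with hY
  set X := repX (fun _ : Fin n => 1) (fun _ _ => 1) Tz Ty Tx with hX
  -- for trivial parameters the operators commute
  have hcomm : ∀ u ∈ Set.range (Sum.elim Y X), ∀ v ∈ Set.range (Sum.elim Y X),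
      u * v = v * u := by
    have h1 : ∀ i j, i < j → Y j * Y i = Y i * Y j := fun i j h => by simpa using hF.yy i j h
    have h2 : ∀ i j, i < j → Y j * X i = X i * Y j := fun i j h => by simpa using hF.yx i j h
    have h3 : ∀ i j, i < j → X j * Y i = Y i * X j := fun i j h => by simpa using hF.xy i j h
    have h4 : ∀ i j, i < j → X j * X i = X i * X j := fun i j h => by simpa using hF.xx i j h
    have h5 : ∀ i, X i * Y i = Y i * X i := fun i => by simpa using hF.weyl i
    rintro _ ⟨i | i, rfl⟩ _ ⟨j | j, rfl⟩ <;> simp only [Sum.elim_inl, Sum.elim_inr] <;>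
      rcases lt_trichotomy i j with h | rfl | h
    · exact (h1 _ _ h).symm
    · rfl
    · exact h1 _ _ h
    · exact (h3 _ _ h).symm
    · exact (h5 _).symm
    · exact h2 _ _ h
    · exact (h2 _ _ h).symm
    · exact h5 _
    · exact h3 _ _ h
    · exact (h4 _ _ h).symm
    · rfl
    · exact h4 _ _ h
  obtain ⟨φ₀, hφ₀⟩ : ∃ φ₀ : MvPolynomial (Fin n ⊕ Fin n) ℂ →ₐ[ℂ] Op (Lat n),
      ∀ s, φ₀ (MvPolynomial.X s) = Sum.elim Y X s :=
    exists_algHom_of_comm (Sum.elim Y X) hcomm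
  have hφY : ∀ i, φ₀ (yP n i) = Y i := fun i => hφ₀ _
  have hφX : ∀ i, φ₀ (xP n i) = X i := fun i => hφ₀ _
  have hker : ∀ a ∈ I, φ₀ a = 0 := by
    have : I ≤ RingHom.ker φ₀ := by
      rw [hI, Ideal.span_le]
      rintro p (⟨m, hm, rfl⟩ | ⟨i, hi, rfl⟩ | ⟨i, hi, rfl⟩)
      · rw [SetLike.mem_coe, RingHom.mem_ker]
        have h := map_zz φ₀ (yP n) (xP n) m
        simp only [hφY, hφX] at h
        exact h.trans (hA.rep_zz hm)
      · rw [SetLike.mem_coe, RingHom.mem_ker, hφY]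
        exact rep_y hi
      · rw [SetLike.mem_coe, RingHom.mem_ker, hφX]
        exact hA.rep_x hi
    exact fun a ha => this ha
  have hWP : WeylFam (fun _ : Fin n => ((1 : ℂˣ) : ℂ)) (fun _ _ => ((1 : ℂˣ) : ℂ))
      (yP n) (xP n) := by
    constructor <;> intros <;> simp [mul_comm]
  set π := Ideal.Quotient.mkₐ ℂ I with hπ
  have hπ0 : ∀ a, π a = 0 ↔ a ∈ I := fun a => Ideal.Quotient.eq_zero_iff_mem
  have hdom := domain_of_rep (q := fun _ => 1) (lam := fun _ _ => 1) hA (by simp) (hWP.map π)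
    (fun m hm => (map_zz π _ _ m).symm.trans ((hπ0 _).mpr (hsub (Or.inl ⟨m, hm, rfl⟩))))
    (fun i hi => (hπ0 _).mpr (hsub (Or.inr (Or.inl ⟨i, hi, rfl⟩))))
    (fun i hi => (hπ0 _).mpr (hsub (Or.inr (Or.inr ⟨i, hi, rfl⟩))))
    (gens_of_surjective _ MvPolynomial.adjoin_range_X π (Ideal.Quotient.mkₐ_surjective _ _))
    (Ideal.Quotient.liftₐ I φ₀ hker)
    (fun i => hφY i) (fun i => hφX i)
  refine ⟨?_, fun {a b} hab => ?_⟩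
  · intro htop
    refine hdom.1 ?_
    rw [← map_one π, hπ0, htop]
    trivial
  · rw [← hπ0, map_mul] at hab
    rw [← hπ0, ← hπ0]
    exact hdom.2 _ _ hab

section Bracket

variable (B : PoissonBr (MvPolynomial (Fin n ⊕ Fin n) ℂ))

lemma br_add_right (a b c : MvPolynomial (Fin n ⊕ Fin n) ℂ) :
    B.br a (b + c) = B.br a b + B.br a c := by
  rw [B.skew, B.add_left, B.skew b, B.skew c]; ring

lemma br_mul_right (a b c : MvPolynomial (Fin n ⊕ Fin n) ℂ) :
    B.br a (b * c) = b * B.br a c + B.br a b * c := by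
  rw [B.skew, B.leibniz, B.skew b, B.skew c]; ring

lemma br_one_left (a : MvPolynomial (Fin n ⊕ Fin n) ℂ) : B.br 1 a = 0 := by
  have := B.leibniz 1 1 a
  simp only [one_mul, mul_one] at this
  exact left_eq_add.mp this

lemma br_zero_left (a : MvPolynomial (Fin n ⊕ Fin n) ℂ) : B.br 0 a = 0 := by
  have := B.add_left 0 0 a
  rw [add_zero] at this
  exact left_eq_add.mp this

lemma br_sum_left {ι : Type} (F : Finset ι) (f : ι → MvPolynomial (Fin n ⊕ Fin n) ℂ)
    (a : MvPolynomial (Fin n ⊕ Fin n) ℂ) : B.br (∑ k ∈ F, f k) a = ∑ k ∈ F, B.br (f k) a := by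
  classical
  induction F using Finset.induction_on with
  | empty => simpa using br_zero_left B a
  | insert k F hk ih => rw [Finset.sum_insert hk, Finset.sum_insert hk, B.add_left, ih]

/-- An ideal is Poisson as soon as the brackets of its generators with the variables lie in it. -/
lemma isPoissonIdeal_span
    (hBsmul : ∀ (c : ℂ) (a b : MvPolynomial (Fin n ⊕ Fin n) ℂ), B.br (c • a) b = c • B.br a b)
    (S : Set (MvPolynomial (Fin n ⊕ Fin n) ℂ))
    (hy : ∀ s ∈ S, ∀ i, B.br s (yP n i) ∈ Ideal.span S)
    (hx : ∀ s ∈ S, ∀ i, B.br s (xP n i) ∈ Ideal.span S) :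
    IsPoissonIdeal B.br (Ideal.span S) := by
  have h1 : ∀ s ∈ S, ∀ b, B.br s b ∈ Ideal.span S := by
    intro s hs b
    induction b using MvPolynomial.induction_on with
    | C c =>
      have h0 : B.br s (MvPolynomial.C c) = 0 := by
        rw [B.skew, MvPolynomial.C_eq_smul_one, hBsmul, br_one_left, smul_zero, neg_zero]
      rw [h0]; exact zero_mem _
    | add p p' h h' => rw [br_add_right]; exact add_mem h h'
    | mul_X p k h =>
      rw [br_mul_right]
      refine add_mem (Ideal.mul_mem_left _ _ ?_) (Ideal.mul_mem_right _ _ h)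
      rcases k with i | i
      · exact hy s hs i
      · exact hx s hs i
  intro a ha b
  induction ha using Submodule.span_induction with
  | mem s hs => exact h1 s hs b
  | zero => rw [br_zero_left]; exact zero_mem _
  | add u v _ _ hu hv => rw [B.add_left]; exact add_mem hu hv
  | smul r u hu ih =>
    rw [smul_eq_mul, B.leibniz]
    exact add_mem (Ideal.mul_mem_left _ _ ih) (Ideal.mul_mem_left _ _ hu)

variable {dq : Fin n → ℂ} {dlam : Fin n → Fin n → ℂ}

/-- If `{s_k, v} = 0` for the summands below `i`, `{s_i, v} = v·c z_{i+1}` and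
`{s_k, v} = v·c s_k` above `i`, where `s_k = y_k x_k`, then `{z_m, v}` is a multiple of `z_m` for
every `m`. -/
lemma br_zP_dvd (i : Fin n) (v : MvPolynomial (Fin n ⊕ Fin n) ℂ) (c : ℂ)
    (hlt : ∀ k < i, B.br (yP n k * xP n k) v = 0)
    (heq : B.br (yP n i * xP n i) v = c • (v * zP n ((i : ℕ) + 1)))
    (hgt : ∀ k, i < k → B.br (yP n k * xP n k) v = c • (v * (yP n k * xP n k)))
    (m : ℕ) (hm : m ≤ n) :
    B.br (zP n m) v = if (i : ℕ) < m then c • (v * zP n m) else 0 := by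
  induction m with
  | zero =>
    have : zP n 0 = 1 := zz_zero _ _
    rw [this, br_one_left, if_neg (by omega)]
  | succ m ih =>
    have hs : zP n (m + 1) = zP n m + yP n ⟨m, hm⟩ * xP n ⟨m, hm⟩ := zz_succ (yP n) (xP n) ⟨m, hm⟩
    rw [hs, B.add_left, ih (by omega)]
    rcases lt_trichotomy (i : ℕ) m with h | h | h
    · rw [if_pos h, if_pos (by omega), hgt ⟨m, hm⟩ h, mul_add, smul_add]
    · obtain rfl : i = ⟨m, hm⟩ := Fin.ext h
      rw [if_neg (lt_irrefl _), if_pos (by simp), heq, zero_add, ← hs]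
    · rw [if_neg (by omega), if_neg (by omega), hlt ⟨m, hm⟩ h, add_zero]

lemma br_self (a : MvPolynomial (Fin n ⊕ Fin n) ℂ) : B.br a a = 0 :=
  self_eq_neg.mp (B.skew a a)

/-- The ideal generated by an admissible set is a Poisson ideal. Each `z_m` is Poisson normal, and
so are `y_i` and `x_i` modulo the bracket `{x_i, y_i}`, a multiple of `z_i` (one-based), which lies in the set
together with `y_i` or `x_i`. -/
theorem poisson_part
    (hBsmul : ∀ (c : ℂ) (a b : MvPolynomial (Fin n ⊕ Fin n) ℂ), B.br (c • a) b = c • B.br a b)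
    (hanti : ∀ i j, dlam j i = -dlam i j)
    (hByy : ∀ i j : Fin n, i < j → B.br (yP n j) (yP n i) = dlam j i • (yP n i * yP n j))
    (hByx : ∀ i j : Fin n, i < j → B.br (yP n j) (xP n i) = dlam i j • (xP n i * yP n j))
    (hBxy : ∀ i j : Fin n, i < j →
      B.br (xP n j) (yP n i) = (dq i + dlam i j) • (yP n i * xP n j))
    (hBxx : ∀ i j : Fin n, i < j →
      B.br (xP n j) (xP n i) = (-(dq i + dlam i j)) • (xP n i * xP n j))
    (hBxyi : ∀ i : Fin n, B.br (xP n i) (yP n i) = dq i • zP n ((i : ℕ) + 1))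
    {Tz : Set ℕ} {Ty Tx : Set (Fin n)} (hA : Adm Tz Ty Tx) :
    IsPoissonIdeal B.br (Ideal.span {p | (∃ m ∈ Tz, p = zP n m) ∨ (∃ i ∈ Ty, p = yP n i) ∨
      (∃ i ∈ Tx, p = xP n i)}) := by
  have hzy := fun i : Fin n => br_zP_dvd B i (yP n i) (dq i)
    (fun k hk => by
      rw [B.leibniz, B.skew (xP n k), B.skew (yP n k), hByx k i hk, hByy k i hk, hanti k i]
      simp only [MvPolynomial.smul_eq_C_mul, map_neg]
      ring)
    (by
      rw [B.leibniz, br_self, hBxyi]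
      simp only [MvPolynomial.smul_eq_C_mul]
      ring)
    (fun k hk => by
      rw [B.leibniz, hBxy i k hk, hByy i k hk, hanti i k]
      simp only [MvPolynomial.smul_eq_C_mul, map_neg, map_add]
      ring)
  have hzx := fun i : Fin n => br_zP_dvd B i (xP n i) (-dq i)
    (fun k hk => by
      rw [B.leibniz, B.skew (xP n k), B.skew (yP n k), hBxx k i hk, hBxy k i hk]
      simp only [MvPolynomial.smul_eq_C_mul, map_neg, map_add]
      ring)
    (by
      rw [B.leibniz, br_self, B.skew (yP n i), hBxyi]
      simp only [MvPolynomial.smul_eq_C_mul, map_neg]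
      ring)
    (fun k hk => by
      rw [B.leibniz, hBxx i k hk, hByx i k hk]
      simp only [MvPolynomial.smul_eq_C_mul, map_neg, map_add]
      ring)
  have hsub := Ideal.subset_span (s := {p | (∃ m ∈ Tz, p = zP n m) ∨ (∃ i ∈ Ty, p = yP n i) ∨
      (∃ i ∈ Tx, p = xP n i)})
  refine isPoissonIdeal_span B hBsmul _ ?_ ?_
  all_goals
    generalize hI : Ideal.span {p | (∃ m ∈ Tz, p = zP n m) ∨ (∃ i ∈ Ty, p = yP n i) ∨
      (∃ i ∈ Tx, p = xP n i)} = I at hsub ⊢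
    have hz : ∀ m ∈ Tz, zP n m ∈ I := fun m hm => hsub (Or.inl ⟨m, hm, rfl⟩)
    have hy : ∀ i ∈ Ty, yP n i ∈ I := fun i hi => hsub (Or.inr (Or.inl ⟨i, hi, rfl⟩))
    have hx : ∀ i ∈ Tx, xP n i ∈ I := fun i hi => hsub (Or.inr (Or.inr ⟨i, hi, rfl⟩))
    have hsm : ∀ (c : ℂ) (p : MvPolynomial (Fin n ⊕ Fin n) ℂ), p ∈ I → c • p ∈ I :=
      fun c p hp => by
        rw [MvPolynomial.smul_eq_C_mul]
        exact Ideal.mul_mem_left _ _ hp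
  · rintro s (⟨m, hm, rfl⟩ | ⟨i, hi, rfl⟩ | ⟨i, hi, rfl⟩) k
    · rw [hzy k m (hA.le m hm)]
      split_ifs
      · exact hsm _ _ (Ideal.mul_mem_left _ _ (hz m hm))
      · exact zero_mem _
    · rcases lt_trichotomy i k with h | rfl | h
      · rw [B.skew, hByy i k h]
        exact neg_mem (hsm _ _ (Ideal.mul_mem_right _ _ (hy i hi)))
      · rw [br_self]
        exact zero_mem _
      · rw [hByy k i h]
        exact hsm _ _ (Ideal.mul_mem_left _ _ (hy i hi))
    · rcases lt_trichotomy i k with h | rfl | h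
      · rw [B.skew, hByx i k h]
        exact neg_mem (hsm _ _ (Ideal.mul_mem_right _ _ (hx i hi)))
      · rw [hBxyi]
        exact hsm _ _ (hz _ ((hA.iff i).mp (Or.inr hi)).1)
      · rw [hBxy k i h]
        exact hsm _ _ (Ideal.mul_mem_left _ _ (hx i hi))
  · rintro s (⟨m, hm, rfl⟩ | ⟨i, hi, rfl⟩ | ⟨i, hi, rfl⟩) k
    · rw [hzx k m (hA.le m hm)]
      split_ifs
      · exact hsm _ _ (Ideal.mul_mem_left _ _ (hz m hm))
      · exact zero_mem _
    · rcases lt_trichotomy i k with h | rfl | h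
      · rw [B.skew, hBxy i k h]
        exact neg_mem (hsm _ _ (Ideal.mul_mem_right _ _ (hy i hi)))
      · rw [B.skew, hBxyi]
        exact neg_mem (hsm _ _ (hz _ ((hA.iff i).mp (Or.inl hi)).1))
      · rw [hByx k i h]
        exact hsm _ _ (Ideal.mul_mem_left _ _ (hy i hi))
    · rcases lt_trichotomy i k with h | rfl | h
      · rw [B.skew, hBxx i k h]
        exact neg_mem (hsm _ _ (Ideal.mul_mem_right _ _ (hx i hi)))
      · rw [br_self]
        exact zero_mem _
      · rw [hBxx k i h]
        exact hsm _ _ (Ideal.mul_mem_left _ _ (hx i hi))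

end Bracket

end Poisson

end QWeyl

/-- for an admissible set `T` (given by a set `Tz` of (1-indexed)
z-indices and sets `Ty`, `Tx` of y- and x-indices), the two-sided ideal of `A_q`
generated by `T` is completely prime, and the ideal of `A₁` generated by `T` is
Poisson prime. -/
theorem stmt_14 (n r : ℕ)
    -- Q and Λ with G(Q,Λ) torsion free, a basis η of G(Q,Λ), and ℚ-linearly
    -- independent complex numbers μ; `c̃'(1) = ∑ s_k μ_k` for `c = ∏ η_k ^ s_k`
    (q : Fin n → ℂ) (hq0 : ∀ i, q i ≠ 0) (hq1 : ∀ i, q i ≠ 1)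
    (lam : Fin n → Fin n → ℂ) (hlam : ∀ i j, lam i j * lam j i = 1)
    (hlamii : ∀ i, lam i i = 1)
    (η : Fin r → ℂ) (hη0 : ∀ k, η k ≠ 0)
    (hfree : ∀ a : Fin r → ℤ, ∏ k, η k ^ a k = 1 → a = 0)
    (μ : Fin r → ℂ) (hμ : LinearIndependent ℚ μ)
    (sq : Fin n → Fin r → ℤ) (hsq : ∀ i, q i = ∏ k, η k ^ sq i k)
    (slam : Fin n → Fin n → Fin r → ℤ) (hslam : ∀ i j, lam i j = ∏ k, η k ^ slam i j k)
    (dq : Fin n → ℂ) (hdq : ∀ i, dq i = ∑ k, (sq i k : ℂ) * μ k)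
    (dlam : Fin n → Fin n → ℂ) (hdlam : ∀ i j, dlam i j = ∑ k, (slam i j k : ℂ) * μ k)
    -- the Poisson bracket of the multi-parameter Poisson Weyl algebra `A₁`
    (B : PoissonBr (MvPolynomial (Fin n ⊕ Fin n) ℂ))
    (hBsmul : ∀ (c : ℂ) (a b : MvPolynomial (Fin n ⊕ Fin n) ℂ), B.br (c • a) b = c • B.br a b)
    (hByy : ∀ i j : Fin n, i < j → B.br (yP n j) (yP n i) = dlam j i • (yP n i * yP n j))
    (hByx : ∀ i j : Fin n, i < j → B.br (yP n j) (xP n i) = dlam i j • (xP n i * yP n j))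
    (hBxy : ∀ i j : Fin n, i < j →
      B.br (xP n j) (yP n i) = (dq i + dlam i j) • (yP n i * xP n j))
    (hBxx : ∀ i j : Fin n, i < j →
      B.br (xP n j) (xP n i) = (-(dq i + dlam i j)) • (xP n i * xP n j))
    (hBxyi : ∀ i : Fin n, B.br (xP n i) (yP n i) = dq i • zP n ((i : ℕ) + 1))
    -- an admissible set, specified by its indices
    (Tz : Set ℕ) (Ty Tx : Set (Fin n))
    (hTz : ∀ m ∈ Tz, 1 ≤ m ∧ m ≤ n)
    (hTy : ∀ i ∈ Ty, 1 ≤ (i : ℕ)) (hTx : ∀ i ∈ Tx, 1 ≤ (i : ℕ))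
    (hadm : ∀ i : Fin n, 1 ≤ (i : ℕ) →
      ((i ∈ Ty ∨ i ∈ Tx) ↔ ((i : ℕ) + 1 ∈ Tz ∧ (i : ℕ) ∈ Tz))) :
    -- (1) `⟨T⟩ ⊆ A_q` is completely prime
    (tsSpan {p : RingQuot (AqRel n q lam) |
        (∃ m ∈ Tz, p = Zq n q lam m) ∨ (∃ i ∈ Ty, p = Yq n q lam i) ∨
        (∃ i ∈ Tx, p = Xq n q lam i)} ≠ ⊤ ∧
      ∀ a b : RingQuot (AqRel n q lam),
        a * b ∈ tsSpan {p : RingQuot (AqRel n q lam) |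
          (∃ m ∈ Tz, p = Zq n q lam m) ∨ (∃ i ∈ Ty, p = Yq n q lam i) ∨
          (∃ i ∈ Tx, p = Xq n q lam i)} →
        a ∈ tsSpan {p : RingQuot (AqRel n q lam) |
          (∃ m ∈ Tz, p = Zq n q lam m) ∨ (∃ i ∈ Ty, p = Yq n q lam i) ∨
          (∃ i ∈ Tx, p = Xq n q lam i)} ∨
        b ∈ tsSpan {p : RingQuot (AqRel n q lam) |
          (∃ m ∈ Tz, p = Zq n q lam m) ∨ (∃ i ∈ Ty, p = Yq n q lam i) ∨
          (∃ i ∈ Tx, p = Xq n q lam i)}) ∧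
    -- (2) `⟨T⟩ ⊆ A₁` is Poisson prime
    IsPoissonPrime B.br (Ideal.span {p : MvPolynomial (Fin n ⊕ Fin n) ℂ |
      (∃ m ∈ Tz, p = zP n m) ∨ (∃ i ∈ Ty, p = yP n i) ∨ (∃ i ∈ Tx, p = xP n i)}) := by
  have hA : QWeyl.Adm Tz Ty Tx := by
    refine ⟨fun h => by simpa using (hTz 0 h).1, fun i => ?_, fun m hm => (hTz m hm).2⟩
    rcases Nat.eq_zero_or_pos (i : ℕ) with h0 | h0
    · constructor
      · rintro (h | h)
        · exact absurd (hTy i h) (by omega)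
        · exact absurd (hTx i h) (by omega)
      · rintro ⟨-, h⟩
        exact absurd (hTz _ h).1 (by omega)
    · exact hadm i h0
  -- antisymmetry of `λ` passes to the exponents because `η` is a basis
  have hanti : ∀ i j, dlam j i = -dlam i j := by
    intro i j
    have h := hlam i j
    rw [hslam, hslam, ← Finset.prod_mul_distrib] at h
    simp only [← zpow_add₀ (hη0 _)] at h
    have h0 := hfree (fun k => slam i j k + slam j i k) h
    rw [eq_neg_iff_add_eq_zero, hdlam, hdlam, ← Finset.sum_add_distrib]
    refine Finset.sum_eq_zero fun k _ => ?_
    have hk : slam i j k + slam j i k = 0 := congrFun h0 k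
    have hk' : (slam i j k : ℂ) + slam j i k = 0 := by exact_mod_cast hk
    linear_combination μ k * hk'
  refine ⟨?_, ?_⟩
  · obtain ⟨q', rfl⟩ : ∃ q' : Fin n → ℂˣ, q = fun i => (q' i : ℂ) :=
      ⟨fun i => Units.mk0 (q i) (hq0 i), rfl⟩
    obtain ⟨lam', rfl⟩ : ∃ lam' : Fin n → Fin n → ℂˣ, lam = fun i j => (lam' i j : ℂ) :=
      ⟨fun i j => Units.mk0 (lam i j) (left_ne_zero_of_mul_eq_one (hlam i j)), rfl⟩
    exact QWeyl.quantum_part hA (fun i j => Units.ext (by simpa using hlam i j)) _ rfl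
  · have hP := QWeyl.comm_part hA _ rfl
    refine ⟨QWeyl.poisson_part B hBsmul hanti hByy hByx hBxy hBxx hBxyi hA, hP.ne_top,
      fun I J _ _ hIJ => ?_⟩
    by_contra! hcon
    obtain ⟨a, haI, haP⟩ := SetLike.not_le_iff_exists.mp hcon.1
    obtain ⟨b, hbJ, hbP⟩ := SetLike.not_le_iff_exists.mp hcon.2
    exact (hP.mem_or_mem (hIJ a haI b hbJ)).elim haP hbP
end

section
/- Let μ_1,…,μ_r be ℚ-linearly independent complex numbers and for each k = 1,…,r let (v^k_{ℓi}) be a skew-symmetric s×s integer matrix. Set d_{ℓi} = v^1_{ℓi} μ_1 + … + v^r_{ℓi} μ_r, and let E be the Laurent polynomial ring ℂ[w_1^{±1},…,w_s^{±1}] with the Poisson bracket determined by {w_ℓ, w_i} = d_{ℓi} w_ℓ w_i. Then the Poisson center of E (the set of f ∈ E with {f, g} = 0 for all g ∈ E) is the ℂ-linear span of the monomials w^u = w_1^{u_1}⋯w_s^{u_s}, u ∈ ℤ^s, satisfying u_1 v^k_{ℓ1} + … + u_s v^k_{ℓs} = 0 for all 1 ≤ ℓ ≤ s and 1 ≤ k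 ≤ r. -/
namespace PoissonBr

section General

variable {R : Type} [CommRing R] (B : PoissonBr R)

lemma br_zero_left (g : R) : B.br 0 g = 0 := by
  have h := B.add_left 0 0 g
  rw [add_zero] at h
  exact left_eq_add.mp h

lemma br_one_left (g : R) : B.br 1 g = 0 := by
  have h := B.leibniz 1 1 g
  rw [mul_one, one_mul, mul_one] at h
  exact left_eq_add.mp h

lemma br_eq_zero_comm {a b : R} (h : B.br a b = 0) : B.br b a = 0 := by
  rw [B.skew, h, neg_zero]

end General

variable {s : ℕ} (B : PoissonBr (AddMonoidAlgebra ℂ (Fin s → ℤ)))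

/-- If `{w_l, g} = c_l w_l g` for all `l`, then `{w^u, g} = (∑ l, u_l c_l) w^u g`: the exponents `u`
with this property form a subgroup of `ℤ^s`, by the Leibniz rule. -/
lemma br_monomial (g : AddMonoidAlgebra ℂ (Fin s → ℤ)) (c : Fin s → ℂ)
    (hc : ∀ l, B.br (AddMonoidAlgebra.single (Pi.single l 1) 1) g
      = c l • (AddMonoidAlgebra.single (Pi.single l 1) 1 * g)) (u : Fin s → ℤ) :
    B.br (AddMonoidAlgebra.single u 1) g
      = (∑ l, (u l : ℂ) * c l) • (AddMonoidAlgebra.single u 1 * g) := by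
  let H : AddSubgroup (Fin s → ℤ) :=
    { carrier := {u | B.br (AddMonoidAlgebra.single u 1) g
        = (∑ l, (u l : ℂ) * c l) • (AddMonoidAlgebra.single u 1 * g)}
      zero_mem' := by
        have h := B.br_one_left g
        rw [AddMonoidAlgebra.one_def] at h
        simp [h]
      add_mem' := by
        intro a b ha hb
        simp only [Set.mem_ofPred_eq] at ha hb ⊢
        have hab : (AddMonoidAlgebra.single (a + b) 1 : AddMonoidAlgebra ℂ (Fin s → ℤ))
            = AddMonoidAlgebra.single a 1 * AddMonoidAlgebra.single b 1 := by
          rw [AddMonoidAlgebra.single_mul_single, one_mul]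
        rw [hab, B.leibniz, ha, hb]
        simp only [Pi.add_apply, Int.cast_add, add_mul, Finset.sum_add_distrib, Algebra.smul_def,
          map_add]
        ring
      neg_mem' := by
        intro a ha
        simp only [Set.mem_ofPred_eq] at ha ⊢
        have hinv : (AddMonoidAlgebra.single (-a) 1 : AddMonoidAlgebra ℂ (Fin s → ℤ))
            * AddMonoidAlgebra.single a 1 = 1 := by
          rw [AddMonoidAlgebra.single_mul_single, one_mul, neg_add_cancel, AddMonoidAlgebra.one_def]
        -- Differentiate `w^{-a} w^a = 1`, then multiply by `w^{-a}`.
        have h := B.leibniz (AddMonoidAlgebra.single (-a) 1) (AddMonoidAlgebra.single a 1) g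
        rw [hinv, B.br_one_left, ha] at h
        simp only [Pi.neg_apply, Int.cast_neg, neg_mul, Finset.sum_neg_distrib, neg_smul]
        simp only [Algebra.smul_def] at h ⊢
        linear_combination (-AddMonoidAlgebra.single (-a) 1) * h
          - (B.br (AddMonoidAlgebra.single (-a) 1) g
            + algebraMap ℂ _ (∑ l, (a l : ℂ) * c l) * AddMonoidAlgebra.single (-a) 1 * g) * hinv }
  have hgen : ∀ l, (Pi.single l 1 : Fin s → ℤ) ∈ H := by
    intro l
    change B.br _ g = _
    rw [hc l]
    congr 1
    rw [Finset.sum_eq_single l]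
    · simp
    · intro b _ hb
      simp [hb]
    · simp
  have hu : u ∈ H := by
    rw [← Finset.univ_sum_single u]
    refine H.sum_mem fun l _ => ?_
    have h := H.zsmul_mem (hgen l) (u l)
    rwa [← Pi.single_smul, smul_eq_mul, mul_one] at h
  exact hu

/-- `{-, w_l}` acts diagonally on coefficients, up to the shift of exponents by `w_l`. -/
lemma coeff_br_generator (hsmul : ∀ (a : ℂ) (x y : AddMonoidAlgebra ℂ (Fin s → ℤ)),
      B.br (a • x) y = a • B.br x y) (d : Fin s → Fin s → ℂ)
    (hB : ∀ l i : Fin s,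
      B.br (AddMonoidAlgebra.single (Pi.single l 1) 1)
          (AddMonoidAlgebra.single (Pi.single i 1) 1)
        = d l i • (AddMonoidAlgebra.single (Pi.single l 1) (1 : ℂ) *
            AddMonoidAlgebra.single (Pi.single i 1) (1 : ℂ)))
    (l : Fin s) (f : AddMonoidAlgebra ℂ (Fin s → ℤ)) (u : Fin s → ℤ) :
    (B.br f (AddMonoidAlgebra.single (Pi.single l 1) 1)).coeff (u + Pi.single l 1)
      = f.coeff u * ∑ i, (u i : ℂ) * d i l := by
  induction f using AddMonoidAlgebra.induction_linear with
  | zero => simp [B.br_zero_left]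
  | add x y hx hy => simp [B.add_left, hx, hy, add_mul]
  | single t a =>
    have ht : (AddMonoidAlgebra.single t a : AddMonoidAlgebra ℂ (Fin s → ℤ))
        = a • AddMonoidAlgebra.single t 1 := by simp
    rw [ht, hsmul, B.br_monomial _ (fun i => d i l) (fun i => hB i l) t,
      AddMonoidAlgebra.single_mul_single]
    by_cases h : t = u
    · subst h
      simp
    · simp [h]

end PoissonBr

/-- Linear independence of the `μ_k` over `ℚ` turns one complex equation into `r` integer ones. -/
lemma weight_eq_zero_iff {r s : ℕ} {μ : Fin r → ℂ} (hμ : LinearIndependent ℚ μ)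
    {v : Fin r → Fin s → Fin s → ℤ} (hskew : ∀ k l i, v k l i = - v k i l)
    {d : Fin s → Fin s → ℂ} (hd : ∀ l i, d l i = ∑ k, (v k l i : ℂ) * μ k)
    (u : Fin s → ℤ) (l : Fin s) :
    ∑ i, (u i : ℂ) * d i l = 0 ↔ ∀ k, ∑ i, u i * v k l i = 0 := by
  have key : ∑ i, (u i : ℂ) * d i l
      = -∑ k, ((∑ i, u i * v k l i : ℤ) : ℚ) • μ k := by
    simp only [hd, Rat.smul_def, Rat.cast_intCast, Finset.mul_sum]
    rw [Finset.sum_comm, ← Finset.sum_neg_distrib]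
    refine Finset.sum_congr rfl fun k _ => ?_
    rw [Int.cast_sum, Finset.sum_mul, ← Finset.sum_neg_distrib]
    refine Finset.sum_congr rfl fun i _ => ?_
    rw [hskew k i l]
    push_cast
    ring
  rw [key, neg_eq_zero]
  constructor
  · intro h k
    exact_mod_cast Fintype.linearIndependent_iff.mp hμ _ h k
  · intro h
    simp [h]

/-- the Poisson center of the Laurent polynomial ring
`ℂ[w_1^{±1},…,w_s^{±1}]` (realized as the group algebra of `ℤ^s`) with bracket
`{w_ℓ, w_i} = d_{ℓi} w_ℓ w_i`, `d_{ℓi} = ∑_k v^k_{ℓi} μ_k` (μ ℚ-linearly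
independent), is the ℂ-linear span of the monomials `w^u` with
`∑_i u_i v^k_{ℓi} = 0` for all `ℓ, k`. -/
theorem stmt_16 (r s : ℕ)
    (μ : Fin r → ℂ) (hμ : LinearIndependent ℚ μ)
    (v : Fin r → Fin s → Fin s → ℤ) (hskew : ∀ k l i, v k l i = - v k i l)
    (d : Fin s → Fin s → ℂ) (hd : ∀ l i, d l i = ∑ k, (v k l i : ℂ) * μ k)
    (B : PoissonBr (AddMonoidAlgebra ℂ (Fin s → ℤ)))
    (hBsmul : ∀ (a : ℂ) (x y : AddMonoidAlgebra ℂ (Fin s → ℤ)),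
      B.br (a • x) y = a • B.br x y)
    (hB : ∀ l i : Fin s,
      B.br (AddMonoidAlgebra.single (Pi.single l 1) 1)
          (AddMonoidAlgebra.single (Pi.single i 1) 1)
        = d l i • (AddMonoidAlgebra.single (Pi.single l 1) (1 : ℂ) *
            AddMonoidAlgebra.single (Pi.single i 1) (1 : ℂ))) :
    {f : AddMonoidAlgebra ℂ (Fin s → ℤ) | ∀ g, B.br f g = 0} =
      (Submodule.span ℂ {x : AddMonoidAlgebra ℂ (Fin s → ℤ) | ∃ u : Fin s → ℤ,
        (∀ (l : Fin s) (k : Fin r), ∑ i, u i * v k l i = 0) ∧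
        x = AddMonoidAlgebra.single u (1 : ℂ)} : Set (AddMonoidAlgebra ℂ (Fin s → ℤ))) := by
  ext f
  simp only [Set.mem_ofPred_eq, SetLike.mem_coe]
  constructor
  · intro hf
    rw [← AddMonoidAlgebra.sum_coeff_single f]
    refine Submodule.sum_mem _ fun u hu => ?_
    have hu1 : (AddMonoidAlgebra.single u (f.coeff u) : AddMonoidAlgebra ℂ (Fin s → ℤ))
        = f.coeff u • AddMonoidAlgebra.single u 1 := by simp
    rw [hu1]
    refine Submodule.smul_mem _ _ (Submodule.subset_span ⟨u, fun l => ?_, rfl⟩)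
    rw [← weight_eq_zero_iff hμ hskew hd]
    have h := B.coeff_br_generator hBsmul d hB l f u
    rw [hf] at h
    exact (mul_eq_zero.mp h.symm).resolve_left (Finsupp.mem_support_iff.mp hu)
  · intro hf g
    induction hf using Submodule.span_induction with
    | zero => exact B.br_zero_left g
    | add x y _ _ hx hy => rw [B.add_left, hx, hy, add_zero]
    | smul a x _ hx => rw [hBsmul, hx, smul_zero]
    | mem x hx =>
      obtain ⟨u, hu, rfl⟩ := hx
      have hgen : ∀ l, B.br (AddMonoidAlgebra.single (Pi.single l 1) 1)
          (AddMonoidAlgebra.single u 1) = 0 := by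
        intro l
        apply B.br_eq_zero_comm
        rw [B.br_monomial _ (fun i => d i l) (fun i => hB i l) u,
          (weight_eq_zero_iff hμ hskew hd u l).mpr (hu l), zero_smul]
      apply B.br_eq_zero_comm
      induction g using AddMonoidAlgebra.induction_linear with
      | zero => exact B.br_zero_left _
      | add x y hx hy => rw [B.add_left, hx, hy, add_zero]
      | single t a =>
        have ht : (AddMonoidAlgebra.single t a : AddMonoidAlgebra ℂ (Fin s → ℤ))
            = a • AddMonoidAlgebra.single t 1 := by simp
        rw [ht, hBsmul, B.br_monomial _ (fun _ => 0) (fun l => by rw [hgen l, zero_smul]) t]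
        simp
end

section
/- The multi-parameter Poisson Weyl algebra A_1 satisfies the Poisson Dixmier–Moeglin equivalence: for a Poisson prime ideal P of A_1 the following are equivalent: (i) P is Poisson primitive; (ii) P is rational, i.e. the Poisson center of the field of fractions of A_1/P equals ℂ; (iii) P is locally closed, i.e. the intersection of all Poisson prime ideals properly containing P is strictly larger than P. -/
/-- `P` is the Poisson core of `M`: the largest Poisson ideal contained in `M`. -/
def IsPoissonCore {R : Type} [CommRing R] (br : R → R → R) (P M : Ideal R) : Prop :=
  IsPoissonIdeal br P ∧ P ≤ M ∧ ∀ J : Ideal R, IsPoissonIdeal br J → J ≤ M → J ≤ P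

/-- `P` is Poisson primitive: the Poisson core of some maximal ideal. -/
def PoissonPrimitive {R : Type} [CommRing R] (br : R → R → R) (P : Ideal R) : Prop :=
  ∃ M : Ideal R, M.IsMaximal ∧ IsPoissonCore br P M

/-- `P` is rational: the Poisson center of the field of fractions of `R/P`
(with the induced Poisson bracket) is `ℂ`. -/
def PoissonRational (R : Type) [CommRing R] [Algebra ℂ R] (br : R → R → R)
    (P : Ideal R) : Prop :=
  ∃ (L : Type) (_ : Field L) (_ : Algebra (R ⧸ P) L) (_ : IsFractionRing (R ⧸ P) L)
    (B' : PoissonBr L),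
    (∀ a b : R,
      B'.br (algebraMap (R ⧸ P) L (Ideal.Quotient.mk P a))
          (algebraMap (R ⧸ P) L (Ideal.Quotient.mk P b))
        = algebraMap (R ⧸ P) L (Ideal.Quotient.mk P (br a b))) ∧
    {f : L | ∀ g : L, B'.br f g = 0} =
      Set.range ((algebraMap (R ⧸ P) L).comp
        ((Ideal.Quotient.mk P).comp (algebraMap ℂ R)))

/-- `P` is locally closed: the intersection of all Poisson prime ideals properly
containing `P` is strictly larger than `P`. -/
def PoissonLocallyClosed {R : Type} [CommRing R] (br : R → R → R) (P : Ideal R) : Prop :=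
  P < sInf {Q : Ideal R | IsPoissonPrime br Q ∧ P < Q}

/-! ### Elementary properties of Poisson brackets -/

namespace PoissonBr

variable {R : Type} [CommRing R] (B : PoissonBr R)

lemma add_right (a b c : R) : B.br a (b + c) = B.br a b + B.br a c := by
  rw [B.skew, B.add_left, B.skew b, B.skew c]; ring

lemma leibniz_right (a b c : R) : B.br a (b * c) = b * B.br a c + B.br a b * c := by
  rw [B.skew, B.leibniz, B.skew b, B.skew c]; ring

lemma zero_left (a : R) : B.br 0 a = 0 := by
  simpa using B.add_left 0 0 a

lemma neg_left (a b : R) : B.br (-a) b = - B.br a b := by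
  have h := B.add_left (-a) a b
  rw [neg_add_cancel, B.zero_left] at h
  linear_combination -h

lemma sub_left (a b c : R) : B.br (a - b) c = B.br a c - B.br b c := by
  rw [sub_eq_add_neg, B.add_left, B.neg_left]; ring

lemma one_left (a : R) : B.br 1 a = 0 := by
  have h := B.leibniz 1 1 a
  simp only [mul_one, one_mul] at h
  linear_combination -h

lemma sum_left {ι : Type*} (s : Finset ι) (f : ι → R) (b : R) :
    B.br (∑ i ∈ s, f i) b = ∑ i ∈ s, B.br (f i) b := by
  classical
  induction s using Finset.induction_on with
  | empty => simp [B.zero_left]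
  | insert a s ha ih => rw [Finset.sum_insert ha, Finset.sum_insert ha, B.add_left, ih]

lemma pow_succ_left (a b : R) (k : ℕ) :
    B.br (a ^ (k + 1)) b = ((k : R) + 1) * a ^ k * B.br a b := by
  induction k with
  | zero => simp
  | succ k ih => rw [pow_succ, B.leibniz, ih]; push_cast; ring

lemma br_self [IsDomain R] [CharZero R] (a : R) : B.br a a = 0 := by
  have h := B.skew a a
  have h2 : (2 : R) * B.br a a = 0 := by linear_combination h
  simpa using h2

end PoissonBr

/-! ### Poisson prime ideals are prime -/

section PoissonPrimes

variable {R : Type} [CommRing R] (B : PoissonBr R)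

/-- In characteristic zero, a minimal prime over a Poisson ideal is a Poisson ideal.
For `a ∈ p` some `s * a ^ n` with `s ∉ p` lies in `I`; applying `D = {-, b}` repeatedly trades
each factor `a` for factors `D a`, until `s' * (D a) ^ k ∈ I ⊆ p` and hence `D a ∈ p`. -/
lemma minimalPrime_isPoissonIdeal [Algebra ℚ R] {I p : Ideal R} (hI : IsPoissonIdeal B.br I)
    (hp : p ∈ I.minimalPrimes) : IsPoissonIdeal B.br p := by
  intro a ha b
  have hpp : p.IsPrime := hp.1.1
  have hIp : I ≤ p := hp.1.2
  have key : ∀ m : ℕ, (∃ s, s ∉ p ∧ ∃ k : ℕ, s * a ^ m * B.br a b ^ (k + 1) ∈ I) →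
      B.br a b ∈ p := by
    intro m
    induction m with
    | zero =>
      rintro ⟨s, hs, k, h⟩
      have h1 := hIp h
      rw [pow_zero, mul_one] at h1
      exact hpp.mem_of_pow_mem _ ((hpp.mem_or_mem h1).resolve_left hs)
    | succ m ih =>
      rintro ⟨s, hs, k, h⟩
      apply ih
      refine ⟨s * s, fun h' => (hpp.mem_or_mem h').elim hs hs, k + 2, ?_⟩
      have h1 := hI _ h b
      rw [B.leibniz, B.leibniz, B.pow_succ_left, B.pow_succ_left] at h1
      set d := B.br a b with hd
      set e := B.br d b
      have h2 : ((m : R) + 1) * (s * s * a ^ m * d ^ (k + 2 + 1)) ∈ I := by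
        have h3 : ((m : R) + 1) * (s * s * a ^ m * d ^ (k + 2 + 1)) =
            (s * d) * (s * a ^ (m + 1) * (((k : R) + 1) * d ^ k * e) +
              (s * (((m : R) + 1) * a ^ m * d) + B.br s b * a ^ (m + 1)) * d ^ (k + 1))
            - (s * ((k : R) + 1) * e + d * B.br s b) * (s * a ^ (m + 1) * d ^ (k + 1)) := by ring
        rw [h3]
        exact I.sub_mem (I.mul_mem_left _ h1) (I.mul_mem_left _ h)
      have h4 : algebraMap ℚ R ((m : ℚ) + 1)⁻¹ * ((m : R) + 1) = 1 := by
        have : ((m : R) + 1) = algebraMap ℚ R ((m : ℚ) + 1) := by simp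
        rw [this, ← map_mul, inv_mul_cancel₀ (by positivity), map_one]
      have h5 := I.mul_mem_left (algebraMap ℚ R ((m : ℚ) + 1)⁻¹) h2
      rwa [← mul_assoc, h4, one_mul] at h5
  -- a minimal prime consists of elements that are nilpotent modulo `I` after localization at `p`
  have hex : ∃ s, s ∉ p ∧ ∃ n : ℕ, s * a ^ n ∈ I := by
    by_contra hcon
    push Not at hcon
    let S : Submonoid R := p.primeCompl ⊔ Submonoid.powers a
    have hdis : Disjoint (I : Set R) (S : Set R) := by
      rw [Set.disjoint_left]
      intro x hx hxS
      obtain ⟨s, hs, t, ⟨n, rfl⟩, rfl⟩ := Submonoid.mem_sup.1 hxS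
      exact hcon s hs n hx
    obtain ⟨q, hq, hIq, hqS⟩ := Ideal.exists_le_prime_disjoint I S hdis
    have hqp : q ≤ p := by
      intro x hx
      by_contra hxp
      exact Set.disjoint_left.1 hqS hx ((le_sup_left : p.primeCompl ≤ S) hxp)
    have := hp.2 ⟨hq, hIq⟩ hqp ha
    exact Set.disjoint_left.1 hqS this
      ((le_sup_right : Submonoid.powers a ≤ S) (Submonoid.mem_powers a))
  obtain ⟨s, hs, n, h⟩ := hex
  exact key n ⟨s, hs, 0, I.mul_mem_right _ h⟩

lemma IsPoissonIdeal.mul {I J : Ideal R} (hI : IsPoissonIdeal B.br I)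
    (hJ : IsPoissonIdeal B.br J) : IsPoissonIdeal B.br (I * J) := by
  intro a ha b
  induction ha using Submodule.mul_induction_on' with
  | mem_mul_mem x hx y hy =>
    rw [B.leibniz]
    exact Ideal.add_mem _ (Ideal.mul_mem_mul hx (hJ y hy b)) (Ideal.mul_mem_mul (hI x hx b) hy)
  | add x _ y _ hx hy => rw [B.add_left]; exact Ideal.add_mem _ hx hy

lemma isPoissonIdeal_top : IsPoissonIdeal B.br (⊤ : Ideal R) := fun _ _ _ => trivial

lemma isPoissonIdeal_prod (s : Finset (Ideal R))
    (h : ∀ p ∈ s, IsPoissonIdeal B.br p) : IsPoissonIdeal B.br (∏ p ∈ s, p) := by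
  classical
  induction s using Finset.induction_on with
  | empty => rw [Finset.prod_empty, Ideal.one_eq_top]; exact isPoissonIdeal_top B
  | insert a s ha ih =>
    rw [Finset.prod_insert ha]
    exact (h a (Finset.mem_insert_self a s)).mul B
      (ih fun p hp => h p (Finset.mem_insert_of_mem hp))

variable {B}

lemma IsPoissonPrime.le_of_mul_le {P I J : Ideal R} (hP : IsPoissonPrime B.br P)
    (hI : IsPoissonIdeal B.br I) (hJ : IsPoissonIdeal B.br J) (h : I * J ≤ P) :
    I ≤ P ∨ J ≤ P :=
  hP.2.2 I J hI hJ fun _ ha _ hb => h (Ideal.mul_mem_mul ha hb)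

lemma IsPoissonPrime.exists_le_of_prod_le {P : Ideal R} (hP : IsPoissonPrime B.br P)
    (s : Finset (Ideal R)) (h : ∀ p ∈ s, IsPoissonIdeal B.br p) (hle : ∏ p ∈ s, p ≤ P) :
    ∃ p ∈ s, p ≤ P := by
  classical
  induction s using Finset.induction_on with
  | empty =>
    rw [Finset.prod_empty, Ideal.one_eq_top] at hle
    exact absurd (top_le_iff.1 hle) hP.2.1
  | insert a s ha ih =>
    rw [Finset.prod_insert ha] at hle
    have h' : ∀ p ∈ s, IsPoissonIdeal B.br p := fun p hp => h p (Finset.mem_insert_of_mem hp)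
    rcases hP.le_of_mul_le (h a (Finset.mem_insert_self a s)) (isPoissonIdeal_prod B s h') hle
      with h1 | h1
    · exact ⟨a, Finset.mem_insert_self a s, h1⟩
    · obtain ⟨p, hp, hpP⟩ := ih h' h1
      exact ⟨p, Finset.mem_insert_of_mem hp, hpP⟩

lemma IsPoissonPrime.le_of_pow_le {P I : Ideal R} (hP : IsPoissonPrime B.br P)
    (hI : IsPoissonIdeal B.br I) (k : ℕ) (h : I ^ k ≤ P) : I ≤ P := by
  have hpow : ∀ k : ℕ, IsPoissonIdeal B.br (I ^ k) := by
    intro k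
    induction k with
    | zero => rw [pow_zero, Ideal.one_eq_top]; exact isPoissonIdeal_top B
    | succ k ih => rw [pow_succ]; exact ih.mul B hI
  induction k with
  | zero =>
    rw [pow_zero, Ideal.one_eq_top] at h
    exact absurd (top_le_iff.1 h) hP.2.1
  | succ k ih =>
    rw [pow_succ] at h
    exact (hP.le_of_mul_le (hpow k) hI h).elim ih id

/-- In a Noetherian `ℚ`-algebra a Poisson prime ideal is prime: its finitely many minimal primes
are Poisson and a product of their powers lies in it. -/
lemma IsPoissonPrime.isPrime [Algebra ℚ R] [IsNoetherianRing R] {P : Ideal R}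
    (hP : IsPoissonPrime B.br P) : P.IsPrime := by
  have hmin : ∀ p ∈ P.minimalPrimes, IsPoissonIdeal B.br p := fun p hp =>
    minimalPrime_isPoissonIdeal B hP.1 hp
  have hfin := P.finite_minimalPrimes_of_isNoetherianRing
  have hrad : IsPoissonIdeal B.br P.radical := by
    rw [← Ideal.sInf_minimalPrimes]
    intro a ha b
    rw [Ideal.mem_sInf] at ha ⊢
    exact fun {p} hp => hmin p hp a (ha hp) b
  obtain ⟨k, hk⟩ := P.exists_radical_pow_le_of_fg P.radical.fg_of_isNoetherianRing
  have hradle : P.radical ≤ P := hP.le_of_pow_le hrad k hk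
  obtain ⟨p, hp, hpP⟩ := hP.exists_le_of_prod_le hfin.toFinset
    (fun p hp => hmin p (hfin.mem_toFinset.1 hp)) (by
      refine le_trans ?_ hradle
      rw [← Ideal.sInf_minimalPrimes]
      refine le_trans Ideal.prod_le_inf (le_sInf fun p hp => ?_)
      exact Finset.inf_le (f := fun p => p) (hfin.mem_toFinset.2 hp))
  have hp' := hfin.mem_toFinset.1 hp
  rw [← le_antisymm hpP hp'.1.2]
  exact hp'.1.1

end PoissonPrimes

/-! ### Locally closed implies primitive -/

section LocallyClosed

variable {R : Type} [CommRing R] (B : PoissonBr R)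

lemma exists_poissonCore (M : Ideal R) : ∃ P, IsPoissonCore B.br P M := by
  refine ⟨sSup {J | IsPoissonIdeal B.br J ∧ J ≤ M}, ?_, sSup_le fun J hJ => hJ.2,
    fun J h1 h2 => le_sSup ⟨h1, h2⟩⟩
  intro a ha b
  rw [sSup_eq_iSup'] at ha ⊢
  induction ha using Submodule.iSup_induction' with
  | mem i x hx => exact Submodule.mem_iSup_of_mem i (i.2.1 x hx b)
  | zero => rw [B.zero_left]; exact Submodule.zero_mem _
  | add x y _ _ hx hy => rw [B.add_left]; exact Submodule.add_mem _ hx hy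

variable {B}

lemma IsPoissonCore.isPoissonPrime {P M : Ideal R} [hM : M.IsPrime]
    (h : IsPoissonCore B.br P M) : IsPoissonPrime B.br P := by
  refine ⟨h.1, ?_, ?_⟩
  · rintro rfl
    exact hM.ne_top (top_le_iff.1 h.2.1)
  · intro I J hI hJ hIJ
    have : I * J ≤ M := le_trans (Ideal.mul_le.2 hIJ) h.2.1
    exact (hM.mul_le.1 this).imp (h.2.2 I hI) (h.2.2 J hJ)

/-- In a Jacobson ring a locally closed Poisson prime ideal is Poisson primitive: being an
intersection of maximal ideals, it must equal the Poisson core of one of them. -/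
lemma PoissonLocallyClosed.primitive [IsJacobsonRing R] {P : Ideal R} [hP : P.IsPrime]
    (hPP : IsPoissonIdeal B.br P) (h : PoissonLocallyClosed B.br P) :
    PoissonPrimitive B.br P := by
  by_contra hcon
  refine h.not_ge ?_
  have hjac : P.jacobson = P := IsJacobsonRing.out ‹_› hP.isRadical
  conv_rhs => rw [← hjac]
  refine le_sInf ?_
  rintro M ⟨hPM, hM⟩
  obtain ⟨C, hC⟩ := exists_poissonCore B M
  have hPC : P ≤ C := hC.2.2 P hPP hPM
  have hne : P ≠ C := by
    rintro rfl
    exact hcon ⟨M, hM, hC⟩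
  have : M.IsPrime := hM.isPrime
  exact le_trans (sInf_le ⟨hC.isPoissonPrime, lt_of_le_of_ne hPC hne⟩) hC.2.1

end LocallyClosed

/-! ### Extending a Poisson bracket to a field of fractions -/

section Extension

variable {R L : Type} [CommRing R] [Field L]

/-- `D : R → L` is a derivation along the ring homomorphism `π : R → L`, factoring through the
image of `π`. -/
structure IsDerAlong (π : R →+* L) (D : R → L) : Prop where
  add : ∀ a b, D (a + b) = D a + D b
  mul : ∀ a b, D (a * b) = π a * D b + D a * π b
  ker : ∀ a, π a = 0 → D a = 0

lemma IsDerAlong.sub {π : R →+* L} {D : R → L} (hD : IsDerAlong π D) (a b : R) :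
    D (a - b) = D a - D b := by
  have := hD.add (a - b) b
  rw [sub_add_cancel] at this
  linear_combination -this

/-- Every element of the field `L` is a quotient of two elements of the image of `π`. -/
def IsFracHom (π : R →+* L) : Prop := ∀ f : L, ∃ p : R × R, π p.2 ≠ 0 ∧ f * π p.2 = π p.1

/-- The extension of a derivation along `π` to a derivation of `L`, given on a chosen
representation `f = π a / π b` by `(D a - f * D b) / π b`. -/
noncomputable def fracDer {π : R →+* L} (hπ : IsFracHom π) (D : R → L) (f : L) : L :=
  (D (hπ f).choose.1 - f * D (hπ f).choose.2) / π (hπ f).choose.2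

variable {π : R →+* L}

/-- The value of `fracDer` may be computed from any representation of `f` as a fraction. -/
lemma fracDer_spec (hπ : IsFracHom π) {D : R → L} (hD : IsDerAlong π D) (f : L) (a b : R) (hb : π b ≠ 0)
    (h : f * π b = π a) : fracDer hπ D f = (D a - f * D b) / π b := by
  unfold fracDer
  obtain ⟨hb', h'⟩ := (hπ f).choose_spec
  set a' := (hπ f).choose.1
  set b' := (hπ f).choose.2
  have hk : π (a * b' - a' * b) = 0 := by
    rw [map_sub, map_mul, map_mul, ← h, ← h']; ring
  have hk' := hD.ker _ hk
  rw [hD.sub, hD.mul, hD.mul, ← h, ← h'] at hk'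
  rw [div_eq_div_iff hb' hb]
  linear_combination -hk'

lemma fracDer_apply (hπ : IsFracHom π) {D : R → L} (hD : IsDerAlong π D) (a : R) : fracDer hπ D (π a) = D a := by
  have h1 : D 1 = 0 := by
    have := hD.mul 1 1
    simp only [mul_one, map_one, one_mul] at this
    linear_combination -this
  rw [fracDer_spec hπ hD (π a) a 1 (by simp) (by simp), h1]
  simp

lemma fracDer_add (hπ : IsFracHom π) {D : R → L} (hD : IsDerAlong π D) (f g : L) :
    fracDer hπ D (f + g) = fracDer hπ D f + fracDer hπ D g := by
  obtain ⟨⟨a, b⟩, hb, h⟩ := hπ f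
  obtain ⟨⟨c, d⟩, hd, h'⟩ := hπ g
  simp only at hb h hd h'
  rw [fracDer_spec hπ hD f a b hb h, fracDer_spec hπ hD g c d hd h',
    fracDer_spec hπ hD (f + g) (a * d + c * b) (b * d)
      (by rw [map_mul]; exact mul_ne_zero hb hd)
      (by simp only [map_mul, map_add, ← h, ← h']; ring),
    hD.add, hD.mul, hD.mul, hD.mul, ← h, ← h', map_mul]
  field_simp
  ring

lemma fracDer_mul (hπ : IsFracHom π) {D : R → L} (hD : IsDerAlong π D) (f g : L) :
    fracDer hπ D (f * g) = f * fracDer hπ D g + fracDer hπ D f * g := by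
  obtain ⟨⟨a, b⟩, hb, h⟩ := hπ f
  obtain ⟨⟨c, d⟩, hd, h'⟩ := hπ g
  simp only at hb h hd h'
  rw [fracDer_spec hπ hD f a b hb h, fracDer_spec hπ hD g c d hd h',
    fracDer_spec hπ hD (f * g) (a * c) (b * d)
      (by rw [map_mul]; exact mul_ne_zero hb hd)
      (by simp only [map_mul, ← h, ← h']; ring),
    hD.mul, hD.mul, ← h, ← h', map_mul]
  field_simp
  ring

/-- A derivation of `L` vanishing on the image of `π` is zero. -/
lemma der_eq_zero (hπ : IsFracHom π) (E : L → L)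
    (hmul : ∀ f g, E (f * g) = f * E g + E f * g) (h0 : ∀ a, E (π a) = 0) (f : L) : E f = 0 := by
  obtain ⟨⟨a, b⟩, hb, h⟩ := hπ f
  simp only at hb h
  have h1 := hmul f (π b)
  rw [h, h0, h0, mul_zero, zero_add] at h1
  exact (mul_eq_zero.1 h1.symm).resolve_right hb

/-- A Poisson bracket on `R` for which `ker π` is a Poisson ideal extends to a Poisson bracket
on `L`. The bracket is extended first in its second and then in its first argument; skew
symmetry and the Jacobi identity propagate from the image of `π` because both sides are
derivations in each argument. -/
lemma exists_frac_poissonBr (hπ : IsFracHom π) (B : PoissonBr R)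
    (hker : ∀ a, π a = 0 → ∀ b, π (B.br a b) = 0) :
    ∃ B' : PoissonBr L, ∀ a b, B'.br (π a) (π b) = π (B.br a b) := by
  have hker' : ∀ a, π a = 0 → ∀ b, π (B.br b a) = 0 := by
    intro a ha b
    rw [B.skew, map_neg, hker a ha, neg_zero]
  have h1 : ∀ a, IsDerAlong π (fun b => π (B.br a b)) := fun a =>
    { add := fun b c => by rw [B.add_right, map_add]
      mul := fun b c => by rw [B.leibniz_right, map_add, map_mul, map_mul]
      ker := fun b hb => hker' b hb a }
  let E : R → L → L := fun a => fracDer hπ (fun b => π (B.br a b))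
  have hEadd : ∀ a f g, E a (f + g) = E a f + E a g := fun a => fracDer_add hπ (h1 a)
  have hEmul : ∀ a f g, E a (f * g) = f * E a g + E a f * g := fun a => fracDer_mul hπ (h1 a)
  have hEap : ∀ a b, E a (π b) = π (B.br a b) := fun a => fracDer_apply hπ (h1 a)
  have h2 : ∀ g, IsDerAlong π (fun a => E a g) := by
    intro g
    obtain ⟨⟨a, b⟩, hb, h⟩ := hπ g
    simp only at hb h
    have hE : ∀ c, E c g = (π (B.br c a) - g * π (B.br c b)) / π b := fun c =>
      fracDer_spec hπ (h1 c) g a b hb h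
    refine ⟨fun c d => ?_, fun c d => ?_, fun c hc => ?_⟩
    · simp only [hE, B.add_left, map_add]; ring
    · simp only [hE, B.leibniz, map_add, map_mul]; ring
    · simp only [hE, hker c hc]; simp
  let F : L → L → L := fun f g => fracDer hπ (fun a => E a g) f
  have hFaddl : ∀ f g h, F (f + g) h = F f h + F g h := fun f g h => fracDer_add hπ (h2 h) f g
  have hFmull : ∀ f g h, F (f * g) h = f * F g h + F f h * g := fun f g h =>
    fracDer_mul hπ (h2 h) f g
  have hFapl : ∀ a g, F (π a) g = E a g := fun a g => fracDer_apply hπ (h2 g) a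
  have hFap : ∀ a b, F (π a) (π b) = π (B.br a b) := fun a b => by rw [hFapl, hEap]
  have hF : ∀ f g a b, π b ≠ 0 → f * π b = π a → F f g = (E a g - f * E b g) / π b :=
    fun f g a b hb h => fracDer_spec hπ (h2 g) f a b hb h
  have hFaddr : ∀ f g h, F f (g + h) = F f g + F f h := by
    intro f g h
    obtain ⟨⟨a, b⟩, hb, hf⟩ := hπ f
    rw [hF f _ a b hb hf, hF f g a b hb hf, hF f h a b hb hf, hEadd, hEadd]
    ring
  have hFmulr : ∀ f g h, F f (g * h) = g * F f h + F f g * h := by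
    intro f g h
    obtain ⟨⟨a, b⟩, hb, hf⟩ := hπ f
    rw [hF f _ a b hb hf, hF f g a b hb hf, hF f h a b hb hf, hEmul, hEmul]
    ring
  have hskew0 : ∀ f b, F f (π b) + F (π b) f = 0 := by
    intro f b
    refine der_eq_zero hπ (fun f => F f (π b) + F (π b) f) ?_ ?_ f
    · intro f g; rw [hFmull, hFmulr]; ring
    · intro a; rw [hFap, hFap, B.skew a b, map_neg]; ring
  have hskew : ∀ f g, F f g + F g f = 0 := by
    intro f g
    refine der_eq_zero hπ (fun g => F f g + F g f) ?_ ?_ g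
    · intro g h; rw [hFmull, hFmulr]; ring
    · intro b; exact hskew0 f b
  have hskew' : ∀ f g, F f g = - F g f := fun f g => eq_neg_of_add_eq_zero_left (hskew f g)
  -- the cyclic Jacobi sum, a derivation in its last argument
  let J : L → L → L → L := fun f g h => F f (F g h) + F g (F h f) + F h (F f g)
  have hJcyc : ∀ f g h, J f g h = J g h f := fun f g h => by simp only [J]; ring
  have hFneg : ∀ f g, F f (-g) = - F f g := by
    intro f g
    have hz : F f 0 = 0 := by simpa using hFaddr f 0 0
    have := hFaddr f (-g) g
    rw [neg_add_cancel, hz] at this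
    exact (neg_eq_of_add_eq_zero_left this.symm).symm
  have hJ' : ∀ f g h, J f g h = F f (F g h) - F g (F f h) - F (F f g) h := by
    intro f g h
    simp only [J]
    rw [hskew' h f, hFneg, hskew' h (F f g)]
    ring
  have hJzero : ∀ f g, (∀ c, J f g (π c) = 0) → ∀ h, J f g h = 0 := by
    intro f g h0 h
    refine der_eq_zero hπ (fun h => J f g h) ?_ h0 h
    · intro h k
      simp only [hJ', hFaddr, hFmulr]
      ring
  have hJ0 : ∀ a b c, J (π a) (π b) (π c) = 0 := by
    intro a b c
    rw [hJ', hFap, hFap, hFap, hFap, hFap, hFap, B.jacobi, map_add]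
    ring
  have hJ1 : ∀ a b h, J (π a) (π b) h = 0 := fun a b => hJzero _ _ (hJ0 a b)
  have hJ2 : ∀ f b h, J f (π b) h = 0 := fun f b => hJzero _ _ fun c => by
    rw [hJcyc]; exact hJ1 b c f
  have hJ3 : ∀ f g h, J f g h = 0 := fun f g => hJzero _ _ fun c => by
    rw [hJcyc]; exact hJ2 g c f
  refine ⟨⟨F, hFaddl, hskew', ?_, hFmull⟩, hFap⟩
  intro f g h
  have := hJ3 f g h
  rw [hJ'] at this
  linear_combination this

end Extension

/-! ### Primitive implies rational -/

/-- A Poisson primitive ideal of `ℂ[X_σ]` is rational. If `P` is the Poisson core of the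
maximal ideal of a point `v` and `f` is a Poisson-central fraction, then the denominators of `f`
form a Poisson ideal larger than `P`, so `f` is defined at `v`; the numerators of `f - f(v)`
form a Poisson ideal vanishing at `v`, so `f = f(v)`. -/
lemma PoissonPrimitive.rational {σ : Type} [Finite σ] (B : PoissonBr (MvPolynomial σ ℂ))
    (hB : ∀ (c : ℂ) (a b : MvPolynomial σ ℂ), B.br (c • a) b = c • B.br a b)
    {P : Ideal (MvPolynomial σ ℂ)} [hP : P.IsPrime]
    (h : PoissonPrimitive B.br P) : PoissonRational (MvPolynomial σ ℂ) B.br P := by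
  obtain ⟨M, hM, hPI, hPM, hcore⟩ := h
  obtain ⟨v, rfl⟩ := MvPolynomial.eq_vanishingIdeal_singleton_of_isMaximal ℂ hM
  simp only [SetLike.le_def, MvPolynomial.mem_vanishingIdeal_singleton_iff] at hPM hcore
  let A := MvPolynomial σ ℂ ⧸ P
  let L := FractionRing A
  let π : MvPolynomial σ ℂ →+* L := (algebraMap A L).comp (Ideal.Quotient.mk P)
  have hπ0 : ∀ a, π a = 0 ↔ a ∈ P := by
    intro a
    rw [← Ideal.Quotient.eq_zero_iff_mem]
    exact map_eq_zero_iff _ (IsFractionRing.injective A L)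
  have hπ : IsFracHom π := by
    intro f
    obtain ⟨a, b, hb, rfl⟩ := IsFractionRing.div_surjective (A := A) f
    obtain ⟨a, rfl⟩ := Ideal.Quotient.mk_surjective a
    obtain ⟨b, rfl⟩ := Ideal.Quotient.mk_surjective b
    have hb0 : π b ≠ 0 :=
      IsFractionRing.to_map_ne_zero_of_mem_nonZeroDivisors (R := A) hb
    exact ⟨(a, b), hb0, div_mul_cancel₀ _ hb0⟩
  obtain ⟨B', hB'⟩ := exists_frac_poissonBr hπ B
    (fun a ha b => (hπ0 _).2 (hPI a ((hπ0 a).1 ha) b))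
  refine ⟨L, inferInstance, inferInstance, inferInstance, B', hB', ?_⟩
  have hC : ∀ c g, B'.br (π (MvPolynomial.C c)) g = 0 := by
    intro c g
    refine der_eq_zero hπ (fun g => B'.br (π (MvPolynomial.C c)) g)
      (B'.leibniz_right _) (fun a => ?_) g
    rw [hB', ← mul_one (MvPolynomial.C c), ← MvPolynomial.smul_eq_C_mul, hB, B.one_left,
      smul_zero, map_zero]
  ext f
  constructor
  · intro hf
    have hf' : ∀ g, B'.br f g = 0 := hf
    -- the ideal of denominators of `f`
    let I : Ideal (MvPolynomial σ ℂ) :=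
      { carrier := {b | ∃ a, f * π b = π a}
        add_mem' := by
          rintro b b' ⟨a, ha⟩ ⟨a', ha'⟩
          exact ⟨a + a', by rw [map_add, mul_add, ha, ha', map_add]⟩
        zero_mem' := ⟨0, by simp⟩
        smul_mem' := by
          rintro c b ⟨a, ha⟩
          exact ⟨c * a, by rw [smul_eq_mul, map_mul, map_mul, ← ha]; ring⟩ }
    have hI : IsPoissonIdeal B.br I := by
      rintro b ⟨a, ha⟩ w
      refine ⟨B.br a w, ?_⟩
      rw [← hB', ← hB', ← ha, B'.leibniz, hf', zero_mul, add_zero]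
    obtain ⟨b, ⟨a, ha⟩, hb⟩ : ∃ b ∈ I, MvPolynomial.aeval v b ≠ 0 := by
      by_contra hcon
      push Not at hcon
      obtain ⟨⟨a, b⟩, hb, hab⟩ := hπ f
      exact hb ((hπ0 b).2 (hcore I hI (fun {x} hx => hcon x hx) ⟨a, hab⟩))
    let c : ℂ := MvPolynomial.aeval v a / MvPolynomial.aeval v b
    -- the ideal of numerators of `f - c`
    let J : Ideal (MvPolynomial σ ℂ) :=
      { carrier := {s | ∃ t, π s = (f - π (MvPolynomial.C c)) * π t}
        add_mem' := by
          rintro b b' ⟨a, ha⟩ ⟨a', ha'⟩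
          exact ⟨a + a', by rw [map_add, map_add, ha, ha']; ring⟩
        zero_mem' := ⟨0, by simp⟩
        smul_mem' := by
          rintro c b ⟨a, ha⟩
          exact ⟨c * a, by rw [smul_eq_mul, map_mul, map_mul, ha]; ring⟩ }
    have hJ : IsPoissonIdeal B.br J := by
      rintro s ⟨t, hst⟩ w
      refine ⟨B.br t w, ?_⟩
      rw [← hB', ← hB', hst, B'.leibniz, B'.sub_left, hf', hC]
      ring
    have hJM : ∀ ⦃s⦄, s ∈ J → MvPolynomial.aeval v s = 0 := by
      rintro s ⟨t, hst⟩
      have h1 : s * b - (a - MvPolynomial.C c * b) * t ∈ P := by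
        rw [← hπ0]
        simp only [map_sub, map_mul]
        rw [hst, ← ha]
        ring
      have h2 := hPM h1
      simp only [map_sub, map_mul, MvPolynomial.algHom_C, Algebra.algebraMap_self,
        RingHom.id_apply, c] at h2
      rw [div_mul_cancel₀ _ hb, sub_self, zero_mul, sub_zero] at h2
      exact (mul_eq_zero.1 h2).resolve_right hb
    have h3 : a - MvPolynomial.C c * b ∈ J :=
      ⟨b, by rw [map_sub, map_mul, ← ha]; ring⟩
    have h4 := (hπ0 _).2 (hcore J hJ (fun {x} hx => hJM hx) h3)
    have hb0 : π b ≠ 0 := fun h => hb (hPM ((hπ0 b).1 h))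
    refine ⟨c, ?_⟩
    change π (MvPolynomial.C c) = f
    rw [map_sub, map_mul, ← ha, ← sub_mul] at h4
    exact (sub_eq_zero.1 ((mul_eq_zero.1 h4).resolve_right hb0)).symm
  · rintro ⟨c, rfl⟩
    exact hC c

/-! ### Fields generated by log-canonical units -/

/-- Let the Poisson field `L` have Poisson center `ℂ` and be generated as a field by a set `U` of
nonzero elements with `{u, v} ∈ ℂ u v`. Then a subspace `V` stable under multiplication by
`U ∪ U⁻¹` and under the maps `{-, u}`, and containing a nonzero Laurent polynomial in `U`,
contains `1`.

Take `f ∈ V` a nonzero combination of the least possible number of Laurent monomials, with `g₀`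
one of them. For `u ∈ U` the element `u⁻¹ {f, u} - c f`, where `{g₀, u} = c g₀ u`, lies in `V` and
involves fewer monomials, hence vanishes. So `f / g₀` is Poisson central, i.e. a scalar. -/
lemma one_mem_of_logCanonical {L : Type} [Field L] [Algebra ℂ L] (B : PoissonBr L)
    (hcen : ∀ f : L, (∀ g, B.br f g = 0) ↔ ∃ c : ℂ, algebraMap ℂ L c = f)
    (U : Set L) (hU0 : ∀ u ∈ U, u ≠ 0)
    (hlog : ∀ u ∈ U, ∀ v ∈ U, ∃ c : ℂ, B.br u v = c • (u * v))
    (hgen : ∀ f : L, ∃ a ∈ Algebra.adjoin ℂ (U ∪ Set.image Inv.inv U),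
      ∃ b ∈ Algebra.adjoin ℂ (U ∪ Set.image Inv.inv U), b ≠ 0 ∧ f * b = a)
    (V : Submodule ℂ L) (hVmul : ∀ u ∈ U, ∀ f ∈ V, u * f ∈ V)
    (hVinv : ∀ u ∈ U, ∀ f ∈ V, u⁻¹ * f ∈ V)
    (hVbr : ∀ u ∈ U, ∀ f ∈ V, B.br f u ∈ V)
    (hV0 : ∃ f ∈ V, f ≠ 0 ∧ f ∈ Algebra.adjoin ℂ (U ∪ Set.image Inv.inv U)) :
    (1 : L) ∈ V := by
  classical
  have hsmul : ∀ (c : ℂ) (f g : L), B.br (c • f) g = c • B.br f g := by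
    intro c f g
    rw [Algebra.smul_def, B.leibniz, (hcen _).2 ⟨c, rfl⟩, zero_mul, add_zero, Algebra.smul_def]
  let G : Submonoid L := Submonoid.closure (U ∪ Set.image Inv.inv U)
  have hspan : ∀ f, f ∈ Algebra.adjoin ℂ (U ∪ Set.image Inv.inv U) ↔ f ∈ Submodule.span ℂ (G : Set L) := by
    intro f
    rw [← Algebra.adjoin_eq_span]; rfl
  have hG0 : ∀ g ∈ G, g ≠ 0 := by
    intro g hg
    induction hg using Submonoid.closure_induction with
    | mem x hx =>
      rcases hx with hx | ⟨u, hu, rfl⟩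
      · exact hU0 x hx
      · exact inv_ne_zero (hU0 u hu)
    | one => exact one_ne_zero
    | mul x y _ _ hx hy => exact mul_ne_zero hx hy
  have hGlog : ∀ g ∈ G, ∀ u ∈ U, ∃ c : ℂ, B.br g u = c • (g * u) := by
    intro g hg u hu
    induction hg using Submonoid.closure_induction with
    | mem x hx =>
      rcases hx with hx | ⟨w, hw, rfl⟩
      · exact hlog x hx u hu
      · obtain ⟨c, hc⟩ := hlog w hw u hu
        have hw0 := hU0 w hw
        refine ⟨-c, ?_⟩
        have h1 := B.leibniz w w⁻¹ u
        rw [mul_inv_cancel₀ hw0, B.one_left, hc, Algebra.smul_def] at h1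
        rw [Algebra.smul_def, map_neg]
        refine mul_left_cancel₀ hw0 ?_
        linear_combination -h1
    | one => exact ⟨0, by rw [B.one_left, zero_smul]⟩
    | mul x y _ _ hx hy =>
      obtain ⟨c, hc⟩ := hx
      obtain ⟨d, hd⟩ := hy
      refine ⟨c + d, ?_⟩
      rw [B.leibniz, hc, hd]
      simp only [Algebra.smul_def, map_add]
      ring
  have hVGinv : ∀ g ∈ G, ∀ f ∈ V, g⁻¹ * f ∈ V := by
    intro g hg
    induction hg using Submonoid.closure_induction with
    | mem x hx =>
      rcases hx with hx | ⟨w, hw, rfl⟩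
      · exact hVinv x hx
      · intro f hf
        rw [inv_inv]
        exact hVmul w hw f hf
    | one => intro f hf; simpa using hf
    | mul x y _ _ hx hy =>
      intro f hf
      have := hx _ (hy f hf)
      rwa [← mul_assoc, ← mul_inv] at this
  -- a Laurent polynomial in `V` with the fewest monomials
  have hex : ∃ N : ℕ, ∃ t : Finset L, t.card = N ∧ (t : Set L) ⊆ G ∧
      ∃ f ∈ V, f ≠ 0 ∧ f ∈ Submodule.span ℂ (t : Set L) := by
    obtain ⟨f, hfV, hf0, hf⟩ := hV0
    rw [hspan] at hf
    obtain ⟨t, ht, hft⟩ := Submodule.mem_span_finite_of_mem_span hf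
    exact ⟨_, t, rfl, ht, f, hfV, hf0, hft⟩
  obtain ⟨t, htN, htG, f, hfV, hf0, hft⟩ := Nat.find_spec hex
  have hmin : ∀ t' : Finset L, t'.card < t.card → (t' : Set L) ⊆ G → ∀ h ∈ V,
      h ∈ Submodule.span ℂ (t' : Set L) → h = 0 := by
    intro t' hlt ht' h hV hh
    by_contra hne
    exact Nat.find_min hex (htN ▸ hlt) ⟨t', rfl, ht', h, hV, hne, hh⟩
  obtain ⟨g₀, hg₀⟩ : t.Nonempty := by
    rw [Finset.nonempty_iff_ne_empty]
    rintro rfl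
    simp at hft
    exact hf0 hft
  obtain ⟨a, -, hfa⟩ := Submodule.mem_span_finset.1 hft
  have hg₀G := htG hg₀
  have hg₀0 := hG0 g₀ hg₀G
  have hfu : ∀ u ∈ U, B.br (f * g₀⁻¹) u = 0 := by
    intro u hu
    have hu0 := hU0 u hu
    have hc' : ∀ g : L, ∃ c : ℂ, g ∈ t → B.br g u = c • (g * u) := by
      intro g
      by_cases hg : g ∈ t
      · obtain ⟨c, hc⟩ := hGlog g (htG hg) u hu
        exact ⟨c, fun _ => hc⟩
      · exact ⟨0, fun h => absurd h hg⟩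
    choose c hc using hc'
    have hbr : B.br f u = ∑ g ∈ t, (a g * c g) • (g * u) := by
      rw [← hfa, B.sum_left]
      refine Finset.sum_congr rfl fun g hg => ?_
      rw [hsmul, hc g hg, smul_smul]
    have hdiff : u⁻¹ * B.br f u - c g₀ • f = ∑ g ∈ t.erase g₀, (a g * (c g - c g₀)) • g := by
      have h1 : u⁻¹ * B.br f u - c g₀ • f = ∑ g ∈ t, (a g * (c g - c g₀)) • g := by
        rw [hbr, ← hfa, Finset.mul_sum, Finset.smul_sum, ← Finset.sum_sub_distrib]
        refine Finset.sum_congr rfl fun g _ => ?_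
        simp only [Algebra.smul_def, map_mul, map_sub]
        field_simp
      rw [h1, ← Finset.add_sum_erase t _ hg₀]
      simp
    have hzero : u⁻¹ * B.br f u - c g₀ • f = 0 := by
      refine hmin (t.erase g₀) (Finset.card_erase_lt_of_mem hg₀)
        (fun g hg => htG (Finset.mem_of_mem_erase hg)) _
        (V.sub_mem (hVinv u hu _ (hVbr u hu f hfV)) (V.smul_mem _ hfV)) ?_
      rw [hdiff]
      exact Submodule.sum_mem _ fun g hg =>
        Submodule.smul_mem _ _ (Submodule.subset_span hg)
    have h2 : B.br f u = c g₀ • (f * u) := by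
      have := sub_eq_zero.1 hzero
      rw [inv_mul_eq_iff_eq_mul₀ hu0] at this
      rw [this, Algebra.smul_def, Algebra.smul_def]
      ring
    have h3 := B.leibniz (f * g₀⁻¹) g₀ u
    rw [inv_mul_cancel_right₀ hg₀0, h2, hc g₀ hg₀] at h3
    have h4 : B.br (f * g₀⁻¹) u * g₀ = 0 := by
      simp only [Algebra.smul_def] at h3
      have : f * g₀⁻¹ * (algebraMap ℂ L (c g₀) * (g₀ * u)) = algebraMap ℂ L (c g₀) * (f * u) := by
        field_simp
      linear_combination -h3 - this
    exact (mul_eq_zero.1 h4).resolve_right hg₀0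
  -- an element commuting with all of `U` is central
  have hcentral : ∀ g, B.br (f * g₀⁻¹) g = 0 := by
    set w := f * g₀⁻¹
    have hadj : ∀ a ∈ Algebra.adjoin ℂ (U ∪ Set.image Inv.inv U), B.br w a = 0 := by
      intro a ha
      induction ha using Algebra.adjoin_induction with
      | mem x hx =>
        rcases hx with hx | ⟨u, hu, rfl⟩
        · exact hfu x hx
        · have h1 := B.leibniz_right w u u⁻¹
          rw [mul_inv_cancel₀ (hU0 u hu), hfu u hu, zero_mul, add_zero, B.skew, B.one_left,
            neg_zero] at h1
          exact (mul_eq_zero.1 h1.symm).resolve_left (hU0 u hu)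
      | algebraMap c => rw [B.skew, (hcen _).2 ⟨c, rfl⟩, neg_zero]
      | add x y _ _ hx hy => rw [B.add_right, hx, hy, add_zero]
      | mul x y _ _ hx hy => rw [B.leibniz_right, hx, hy]; ring
    intro g
    obtain ⟨a, ha, b, hb, hb0, hab⟩ := hgen g
    have h1 := B.leibniz_right w g b
    rw [hab, hadj a ha, hadj b hb, mul_zero, zero_add] at h1
    exact (mul_eq_zero.1 h1.symm).resolve_right hb0
  obtain ⟨c, hc⟩ := (hcen _).1 hcentral
  have hc0 : c ≠ 0 := by
    rintro rfl
    rw [map_zero] at hc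
    exact (mul_ne_zero hf0 (inv_ne_zero hg₀0)) hc.symm
  have h1 : (1 : L) = c⁻¹ • (g₀⁻¹ * f) := by
    rw [Algebra.smul_def, mul_comm g₀⁻¹, ← hc, ← map_mul, inv_mul_cancel₀ hc0, map_one]
  rw [h1]
  exact V.smul_mem _ (hVGinv g₀ hg₀G f hfV)

/-- A rational Poisson prime `P` of `ℂ[X_σ]` is locally closed as soon as, after inverting
finitely many pairwise log-canonical elements `F` outside `P`, the quotient by `P` is generated by
`F ∪ F⁻¹`: the product of `F` then lies in every Poisson prime properly containing `P`. -/
lemma PoissonRational.locallyClosed {σ : Type} [Finite σ] (B : PoissonBr (MvPolynomial σ ℂ))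
    {P : Ideal (MvPolynomial σ ℂ)} [hP : P.IsPrime]
    (h : PoissonRational (MvPolynomial σ ℂ) B.br P)
    (F : Finset (MvPolynomial σ ℂ)) (hFP : ∀ g ∈ F, g ∉ P)
    (hlog : ∀ g ∈ F, ∀ g' ∈ F, ∃ c : ℂ, B.br g g' - c • (g * g') ∈ P)
    (hgen : ∀ i, ∃ u ∈ F, ∃ a ∈ Algebra.adjoin ℂ (F : Set (MvPolynomial σ ℂ)),
      u * MvPolynomial.X i - a ∈ P) :
    PoissonLocallyClosed B.br P := by
  classical
  obtain ⟨L, _, _, _, B', hB', hcen⟩ := h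
  let π : MvPolynomial σ ℂ →+* L :=
    (algebraMap (MvPolynomial σ ℂ ⧸ P) L).comp (Ideal.Quotient.mk P)
  have hπ0 : ∀ a, π a = 0 ↔ a ∈ P := by
    intro a
    rw [← Ideal.Quotient.eq_zero_iff_mem]
    exact map_eq_zero_iff _ (IsFractionRing.injective (MvPolynomial σ ℂ ⧸ P) L)
  have hBπ : ∀ a b, B'.br (π a) (π b) = π (B.br a b) := hB'
  let _ : Algebra ℂ L := (π.comp (algebraMap ℂ (MvPolynomial σ ℂ))).toAlgebra
  have halg : ∀ c : ℂ, algebraMap ℂ L c = π (MvPolynomial.C c) := fun c => rfl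
  have hπsmul : ∀ (c : ℂ) a, π (c • a) = c • π a := by
    intro c a
    rw [MvPolynomial.smul_eq_C_mul, map_mul, Algebra.smul_def, halg]
  let U : Set L := Set.image π (F : Set (MvPolynomial σ ℂ))
  let S : Subalgebra ℂ L := Algebra.adjoin ℂ (U ∪ Set.image Inv.inv U)
  have hU0 : ∀ g ∈ F, π g ≠ 0 := fun g hg h => hFP g hg ((hπ0 g).1 h)
  have hS : ∀ a, π a ∈ S := by
    have hadj : ∀ a ∈ Algebra.adjoin ℂ (F : Set (MvPolynomial σ ℂ)), π a ∈ S := by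
      intro a ha
      induction ha using Algebra.adjoin_induction with
      | mem x hx => exact Algebra.subset_adjoin (Or.inl ⟨x, hx, rfl⟩)
      | algebraMap c => exact S.algebraMap_mem c
      | add x y _ _ hx hy => rw [map_add]; exact S.add_mem hx hy
      | mul x y _ _ hx hy => rw [map_mul]; exact S.mul_mem hx hy
    intro a
    induction a using MvPolynomial.induction_on with
    | C c => exact S.algebraMap_mem c
    | add p q hp hq => rw [map_add]; exact S.add_mem hp hq
    | mul_X p i hp =>
      rw [map_mul]
      refine S.mul_mem hp ?_
      obtain ⟨u, hu, a, ha, hua⟩ := hgen i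
      rw [← hπ0, map_sub, map_mul, sub_eq_zero] at hua
      have : π (MvPolynomial.X i) = (π u)⁻¹ * π a := by
        rw [← hua, inv_mul_cancel_left₀ (hU0 u hu)]
      rw [this]
      exact S.mul_mem (Algebra.subset_adjoin (Or.inr ⟨π u, ⟨u, hu, rfl⟩, rfl⟩)) (hadj a ha)
  let s : MvPolynomial σ ℂ := ∏ g ∈ F, g
  have hsP : s ∉ P := fun hs => by
    obtain ⟨g, hg, hgP⟩ := hP.prod_mem_iff.1 hs
    exact hFP g hg hgP
  have hle : P ≤ sInf {Q : Ideal (MvPolynomial σ ℂ) | IsPoissonPrime B.br Q ∧ P < Q} :=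
    le_sInf fun Q hQ => hQ.2.le
  refine lt_of_le_of_ne hle fun heq => hsP ?_
  rw [heq, Ideal.mem_sInf]
  rintro Q ⟨hQ, hPQ⟩
  have hQprime : Q.IsPrime := hQ.isPrime
  -- the localization of `Q / P` at the powers of `s`
  let V : Submodule ℂ L :=
    { carrier := {f | ∃ k : ℕ, ∃ r ∈ Q, π s ^ k * f = π r}
      add_mem' := by
        rintro f g ⟨k, r, hr, h⟩ ⟨l, t, ht, h'⟩
        refine ⟨k + l, s ^ l * r + s ^ k * t,
          Q.add_mem (Q.mul_mem_left _ hr) (Q.mul_mem_left _ ht), ?_⟩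
        rw [map_add, map_mul, map_mul, map_pow, map_pow, ← h, ← h']
        ring
      zero_mem' := ⟨0, 0, Q.zero_mem, by simp⟩
      smul_mem' := by
        rintro c f ⟨k, r, hr, h⟩
        refine ⟨k, MvPolynomial.C c * r, Q.mul_mem_left _ hr, ?_⟩
        rw [map_mul, ← h, Algebra.smul_def, halg]
        ring }
  have hone : (1 : L) ∈ V := by
    refine one_mem_of_logCanonical B' ?_ U ?_ ?_ ?_ V ?_ ?_ ?_ ?_
    · intro f
      have := Set.ext_iff.1 hcen f
      exact this
    · rintro _ ⟨g, hg, rfl⟩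
      exact hU0 g hg
    · rintro _ ⟨g, hg, rfl⟩ _ ⟨g', hg', rfl⟩
      obtain ⟨c, hc⟩ := hlog g hg g' hg'
      rw [← hπ0, map_sub, sub_eq_zero, hπsmul, map_mul] at hc
      exact ⟨c, by rw [hBπ, hc]⟩
    · intro f
      obtain ⟨a, b, hb, rfl⟩ := IsFractionRing.div_surjective (A := MvPolynomial σ ℂ ⧸ P) f
      obtain ⟨a, rfl⟩ := Ideal.Quotient.mk_surjective a
      obtain ⟨b, rfl⟩ := Ideal.Quotient.mk_surjective b
      have hb0 : π b ≠ 0 :=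
        IsFractionRing.to_map_ne_zero_of_mem_nonZeroDivisors (R := MvPolynomial σ ℂ ⧸ P) hb
      exact ⟨π a, hS a, π b, hS b, hb0, div_mul_cancel₀ _ hb0⟩
    · rintro _ ⟨g, hg, rfl⟩ f ⟨k, r, hr, h⟩
      refine ⟨k, g * r, Q.mul_mem_left _ hr, ?_⟩
      rw [map_mul, ← h]
      ring
    · rintro _ ⟨g, hg, rfl⟩ f ⟨k, r, hr, h⟩
      refine ⟨k + 1, (∏ g' ∈ F.erase g, g') * r, Q.mul_mem_left _ hr, ?_⟩
      have hsg : π s = π g * π (∏ g' ∈ F.erase g, g') := by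
        rw [← map_mul, Finset.mul_prod_erase F (fun x => x) hg]
      have hg0 := hU0 g hg
      rw [map_mul, ← h, pow_succ]
      nth_rewrite 2 [hsg]
      field_simp
    · rintro _ ⟨g, hg, rfl⟩ f ⟨k, r, hr, h⟩
      refine ⟨k + 1, B.br (s * r) g - ((k : MvPolynomial σ ℂ) + 1) * B.br s g * r,
        Q.sub_mem (hQ.1 _ (Q.mul_mem_left _ hr) _) (Q.mul_mem_left _ hr), ?_⟩
      rw [map_sub, ← hBπ, map_mul, map_mul, map_mul, ← hBπ, ← h, ← mul_assoc, ← pow_succ',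
        B'.leibniz, B'.pow_succ_left]
      simp only [map_add, map_natCast, map_one]
      ring
    · obtain ⟨f, hfQ, hfP⟩ := SetLike.exists_of_lt hPQ
      exact ⟨π f, ⟨0, f, hfQ, by simp⟩, fun h => hfP ((hπ0 f).1 h), hS f⟩
  obtain ⟨k, r, hr, h⟩ := hone
  rw [mul_one, ← map_pow, ← sub_eq_zero, ← map_sub, hπ0] at h
  have : s ^ k ∈ Q := by
    have := Q.add_mem (hPQ.le h) hr
    rwa [sub_add_cancel] at this
  exact hQprime.mem_of_pow_mem _ this

/-! ### The Poisson Weyl algebra -/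

section Weyl

variable {n : ℕ}

lemma zP_zero : zP n 0 = 1 := by simp [zP]

lemma zP_succ (m : ℕ) (hm : m < n) : zP n (m + 1) = zP n m + yP n ⟨m, hm⟩ * xP n ⟨m, hm⟩ := by
  have : Finset.univ.filter (fun k : Fin n => (k : ℕ) < m + 1) =
      insert ⟨m, hm⟩ (Finset.univ.filter (fun k : Fin n => (k : ℕ) < m)) := by
    ext k
    simp only [Finset.mem_filter, Finset.mem_univ, true_and, Finset.mem_insert, Fin.ext_iff]
    omega
  unfold zP
  rw [this, Finset.sum_insert (by simp)]
  ring

/-- The defining relations of the bracket of the multi-parameter Poisson Weyl algebra, with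
parameters written additively. -/
structure WeylBracket (dq : Fin n → ℂ) (dlam : Fin n → Fin n → ℂ)
    (B : PoissonBr (MvPolynomial (Fin n ⊕ Fin n) ℂ)) : Prop where
  anti : ∀ i j, dlam j i = - dlam i j
  yy : ∀ i j : Fin n, i < j → B.br (yP n j) (yP n i) = dlam j i • (yP n i * yP n j)
  yx : ∀ i j : Fin n, i < j → B.br (yP n j) (xP n i) = dlam i j • (xP n i * yP n j)
  xy : ∀ i j : Fin n, i < j →
      B.br (xP n j) (yP n i) = (dq i + dlam i j) • (yP n i * xP n j)
  xx : ∀ i j : Fin n, i < j →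
      B.br (xP n j) (xP n i) = (-(dq i + dlam i j)) • (xP n i * xP n j)
  xyi : ∀ i : Fin n, B.br (xP n i) (yP n i) = dq i • zP n ((i : ℕ) + 1)

variable {dq : Fin n → ℂ} {dlam : Fin n → Fin n → ℂ}
  {B : PoissonBr (MvPolynomial (Fin n ⊕ Fin n) ℂ)}

/-- `z_m` is log-canonical with respect to `y_i`; with indices `i` counted from `0`, the eigenvalue is
`0` for `i ≥ m`. -/
lemma WeylBracket.z_y (hB : WeylBracket dq dlam B) (i : Fin n) (m : ℕ) (hm : m ≤ n) :
    B.br (zP n m) (yP n i) = (if (i : ℕ) < m then dq i else 0) • (yP n i * zP n m) := by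
  induction m with
  | zero => simp [zP_zero, B.one_left]
  | succ m ih =>
    have hm' : m < n := hm
    rw [zP_succ m hm', B.add_left, B.leibniz, ih hm'.le]
    rcases lt_trichotomy (⟨m, hm'⟩ : Fin n) i with hlt | rfl | hlt
    · have h1 : ¬ ((i : ℕ) < m) := by simp [Fin.lt_def] at hlt; omega
      have h2 : ¬ ((i : ℕ) < m + 1) := by simp [Fin.lt_def] at hlt; omega
      rw [if_neg h1, if_neg h2, B.skew (xP n _), B.skew (yP n ⟨m, hm'⟩), hB.yx _ _ hlt,
        hB.yy _ _ hlt, hB.anti ⟨m, hm'⟩ i]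
      simp only [MvPolynomial.smul_eq_C_mul, map_neg, map_zero]
      ring
    · rw [if_neg (by simp), if_pos (by simp), hB.xyi, B.br_self, zP_succ m hm']
      simp only [MvPolynomial.smul_eq_C_mul, map_zero]
      ring
    · have h1 : (i : ℕ) < m := by simpa [Fin.lt_def] using hlt
      rw [if_pos h1, if_pos (by omega), hB.xy _ _ hlt, hB.yy _ _ hlt, hB.anti i ⟨m, hm'⟩]
      simp only [MvPolynomial.smul_eq_C_mul, map_neg, map_add]
      ring

/-- `z_m` is log-canonical with respect to `x_i`; with indices `i` counted from `0`, the eigenvalue is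
`0` for `i ≥ m`. -/
lemma WeylBracket.z_x (hB : WeylBracket dq dlam B) (i : Fin n) (m : ℕ) (hm : m ≤ n) :
    B.br (zP n m) (xP n i) = (if (i : ℕ) < m then -dq i else 0) • (xP n i * zP n m) := by
  induction m with
  | zero => simp [zP_zero, B.one_left]
  | succ m ih =>
    have hm' : m < n := hm
    rw [zP_succ m hm', B.add_left, B.leibniz, ih hm'.le]
    rcases lt_trichotomy (⟨m, hm'⟩ : Fin n) i with hlt | rfl | hlt
    · have h1 : ¬ ((i : ℕ) < m) := by simp [Fin.lt_def] at hlt; omega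
      have h2 : ¬ ((i : ℕ) < m + 1) := by simp [Fin.lt_def] at hlt; omega
      rw [if_neg h1, if_neg h2, B.skew (xP n ⟨m, hm'⟩), B.skew (yP n ⟨m, hm'⟩), hB.xx _ _ hlt,
        hB.xy _ _ hlt]
      simp only [MvPolynomial.smul_eq_C_mul, map_neg, map_zero]
      ring
    · rw [if_neg (by simp), if_pos (by simp), B.skew (yP n _), hB.xyi, B.br_self, zP_succ m hm']
      simp only [MvPolynomial.smul_eq_C_mul, map_zero, map_neg]
      ring
    · have h1 : (i : ℕ) < m := by simpa [Fin.lt_def] using hlt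
      rw [if_pos h1, if_pos (by omega), hB.xx _ _ hlt, hB.yx _ _ hlt]
      simp only [MvPolynomial.smul_eq_C_mul, map_neg, map_add]
      ring

lemma WeylBracket.z_z (hB : WeylBracket dq dlam B) (m l : ℕ) (hm : m ≤ n) (hl : l ≤ n) :
    B.br (zP n m) (zP n l) = 0 := by
  induction l with
  | zero => rw [zP_zero, B.skew, B.one_left, neg_zero]
  | succ l ih =>
    have hl' : l < n := hl
    rw [zP_succ l hl', B.add_right, ih hl'.le, B.leibniz_right, hB.z_x _ m hm, hB.z_y _ m hm]
    split_ifs <;> simp only [MvPolynomial.smul_eq_C_mul, map_neg, map_zero] <;> ring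

/-- `a` and `b` are log-canonical: `{a, b}` is a scalar multiple of `a * b`. -/
def LogCan (B : PoissonBr (MvPolynomial (Fin n ⊕ Fin n) ℂ))
    (a b : MvPolynomial (Fin n ⊕ Fin n) ℂ) : Prop := ∃ c : ℂ, B.br a b = c • (a * b)

lemma LogCan.symm {a b : MvPolynomial (Fin n ⊕ Fin n) ℂ} (h : LogCan B a b) : LogCan B b a := by
  obtain ⟨c, hc⟩ := h
  exact ⟨-c, by rw [B.skew, hc, mul_comm, neg_smul]⟩

lemma WeylBracket.logCan_yy (hB : WeylBracket dq dlam B) (i j : Fin n) :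
    LogCan B (yP n i) (yP n j) := by
  rcases lt_trichotomy i j with h | rfl | h
  · exact LogCan.symm ⟨_, (hB.yy i j h).trans (by rw [mul_comm])⟩
  · exact ⟨0, by rw [B.br_self, zero_smul]⟩
  · exact ⟨_, (hB.yy j i h).trans (by rw [mul_comm])⟩

lemma WeylBracket.logCan_xx (hB : WeylBracket dq dlam B) (i j : Fin n) :
    LogCan B (xP n i) (xP n j) := by
  rcases lt_trichotomy i j with h | rfl | h
  · exact LogCan.symm ⟨_, (hB.xx i j h).trans (by rw [mul_comm])⟩
  · exact ⟨0, by rw [B.br_self, zero_smul]⟩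
  · exact ⟨_, (hB.xx j i h).trans (by rw [mul_comm])⟩

lemma WeylBracket.logCan_xy (hB : WeylBracket dq dlam B) (i j : Fin n) (hij : i ≠ j) :
    LogCan B (xP n i) (yP n j) := by
  rcases lt_or_gt_of_ne hij with h | h
  · exact LogCan.symm ⟨_, (hB.yx i j h).trans (by rw [mul_comm])⟩
  · exact ⟨_, (hB.xy j i h).trans (by rw [mul_comm])⟩

/-- A rational prime ideal of the Poisson Weyl algebra is locally closed. Modulo `P` one inverts
the `y_i` and `z_m` outside `P`, and those `x_i ∉ P` with `y_i ∈ P`; the remaining generators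
are recovered from `y_i x_i = z_{i+1} - z_i` (indices `i` counted from `0`). -/
lemma WeylBracket.locallyClosed (hB : WeylBracket dq dlam B)
    {P : Ideal (MvPolynomial (Fin n ⊕ Fin n) ℂ)} [hP : P.IsPrime]
    (h : PoissonRational (MvPolynomial (Fin n ⊕ Fin n) ℂ) B.br P) :
    PoissonLocallyClosed B.br P := by
  classical
  let F : Finset (MvPolynomial (Fin n ⊕ Fin n) ℂ) :=
    (Finset.univ.filter fun i => yP n i ∉ P).image (yP n) ∪
    (Finset.univ.filter fun i => xP n i ∉ P ∧ yP n i ∈ P).image (xP n) ∪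
    ((Finset.range (n + 1)).filter fun m => zP n m ∉ P).image (zP n)
  have hF : ∀ g, g ∈ F ↔ (∃ i, yP n i ∉ P ∧ yP n i = g) ∨
      (∃ i, (xP n i ∉ P ∧ yP n i ∈ P) ∧ xP n i = g) ∨ ∃ m ≤ n, zP n m ∉ P ∧ zP n m = g := by
    intro g
    simp only [F, Finset.mem_union, Finset.mem_image, Finset.mem_filter, Finset.mem_univ, true_and,
      Finset.mem_range, or_assoc, Nat.lt_succ_iff, and_assoc]
  have hone : (1 : MvPolynomial (Fin n ⊕ Fin n) ℂ) ∈ F :=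
    (hF 1).2 (Or.inr (Or.inr ⟨0, Nat.zero_le n, by
      rw [zP_zero]; exact ⟨fun h1 => hP.ne_top ((Ideal.eq_top_iff_one P).2 h1), rfl⟩⟩))
  have hzadj : ∀ m ≤ n, ∃ a ∈ Algebra.adjoin ℂ (F : Set (MvPolynomial (Fin n ⊕ Fin n) ℂ)),
      zP n m - a ∈ P := by
    intro m hm
    by_cases hz : zP n m ∈ P
    · exact ⟨0, Subalgebra.zero_mem _, by simpa using hz⟩
    · exact ⟨zP n m, Algebra.subset_adjoin ((hF _).2 (Or.inr (Or.inr ⟨m, hm, hz, rfl⟩))),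
        by simp⟩
  refine h.locallyClosed B F ?_ ?_ ?_
  · intro g hg
    rcases (hF g).1 hg with ⟨i, hi, rfl⟩ | ⟨i, hi, rfl⟩ | ⟨m, -, hm, rfl⟩
    exacts [hi, hi.1, hm]
  · have key : ∀ g ∈ F, ∀ g' ∈ F, LogCan B g g' := by
      intro g hg g' hg'
      rcases (hF g).1 hg with ⟨i, hi, rfl⟩ | ⟨i, hi, rfl⟩ | ⟨m, hmn, hm, rfl⟩ <;>
      rcases (hF g').1 hg' with ⟨j, hj, rfl⟩ | ⟨j, hj, rfl⟩ | ⟨l, hln, hl, rfl⟩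
      · exact hB.logCan_yy i j
      · exact (hB.logCan_xy j i (by rintro rfl; exact hi hj.2)).symm
      · exact LogCan.symm ⟨_, (hB.z_y i l hln).trans (by rw [mul_comm])⟩
      · exact hB.logCan_xy i j (by rintro rfl; exact hj hi.2)
      · exact hB.logCan_xx i j
      · exact LogCan.symm ⟨_, (hB.z_x i l hln).trans (by rw [mul_comm])⟩
      · exact ⟨_, (hB.z_y j m hmn).trans (by rw [mul_comm])⟩
      · exact ⟨_, (hB.z_x j m hmn).trans (by rw [mul_comm])⟩
      · exact ⟨0, by rw [hB.z_z m l hmn hln, zero_smul]⟩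
    intro g hg g' hg'
    obtain ⟨c, hc⟩ := key g hg g' hg'
    exact ⟨c, by rw [hc, sub_self]; exact P.zero_mem⟩
  · rintro (i | i)
    · change ∃ u ∈ F, ∃ a ∈ _, u * yP n i - a ∈ P
      by_cases hy : yP n i ∈ P
      · exact ⟨1, hone, 0, Subalgebra.zero_mem _, by simpa using hy⟩
      · exact ⟨1, hone, yP n i, Algebra.subset_adjoin ((hF _).2 (Or.inl ⟨i, hy, rfl⟩)), by simp⟩
    · change ∃ u ∈ F, ∃ a ∈ _, u * xP n i - a ∈ P
      by_cases hx : xP n i ∈ P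
      · exact ⟨1, hone, 0, Subalgebra.zero_mem _, by simpa using hx⟩
      by_cases hy : yP n i ∈ P
      · exact ⟨1, hone, xP n i,
          Algebra.subset_adjoin ((hF _).2 (Or.inr (Or.inl ⟨i, ⟨hx, hy⟩, rfl⟩))), by simp⟩
      · obtain ⟨a, ha, haP⟩ := hzadj (i + 1) i.2
        obtain ⟨b, hb, hbP⟩ := hzadj i i.2.le
        refine ⟨yP n i, (hF _).2 (Or.inl ⟨i, hy, rfl⟩), a - b, Subalgebra.sub_mem _ ha hb, ?_⟩
        have h1 : yP n i * xP n i - (a - b) = (zP n (i + 1) - a) - (zP n i - b) := by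
          rw [zP_succ i i.2]; ring
        rw [h1]
        exact P.sub_mem haP hbP

end Weyl

/-- the multi-parameter Poisson Weyl algebra `A₁` satisfies the Poisson
Dixmier–Moeglin equivalence: a Poisson prime ideal is Poisson primitive iff rational
iff locally closed. -/
theorem stmt_17 (n r : ℕ)
    -- Q and Λ with G(Q,Λ) torsion free, a basis η of G(Q,Λ), and ℚ-linearly
    -- independent complex numbers μ; `c̃'(1) = ∑ s_k μ_k` for `c = ∏ η_k ^ s_k`
    (q : Fin n → ℂ) (hq0 : ∀ i, q i ≠ 0) (hq1 : ∀ i, q i ≠ 1)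
    (lam : Fin n → Fin n → ℂ) (hlam : ∀ i j, lam i j * lam j i = 1)
    (hlamii : ∀ i, lam i i = 1)
    (η : Fin r → ℂ) (hη0 : ∀ k, η k ≠ 0)
    (hfree : ∀ a : Fin r → ℤ, ∏ k, η k ^ a k = 1 → a = 0)
    (μ : Fin r → ℂ) (hμ : LinearIndependent ℚ μ)
    (sq : Fin n → Fin r → ℤ) (hsq : ∀ i, q i = ∏ k, η k ^ sq i k)
    (slam : Fin n → Fin n → Fin r → ℤ) (hslam : ∀ i j, lam i j = ∏ k, η k ^ slam i j k)
    (dq : Fin n → ℂ) (hdq : ∀ i, dq i = ∑ k, (sq i k : ℂ) * μ k)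
    (dlam : Fin n → Fin n → ℂ) (hdlam : ∀ i j, dlam i j = ∑ k, (slam i j k : ℂ) * μ k)
    -- the Poisson bracket of the multi-parameter Poisson Weyl algebra `A₁`
    (B : PoissonBr (MvPolynomial (Fin n ⊕ Fin n) ℂ))
    (hBsmul : ∀ (c : ℂ) (a b : MvPolynomial (Fin n ⊕ Fin n) ℂ), B.br (c • a) b = c • B.br a b)
    (hByy : ∀ i j : Fin n, i < j → B.br (yP n j) (yP n i) = dlam j i • (yP n i * yP n j))
    (hByx : ∀ i j : Fin n, i < j → B.br (yP n j) (xP n i) = dlam i j • (xP n i * yP n j))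
    (hBxy : ∀ i j : Fin n, i < j →
      B.br (xP n j) (yP n i) = (dq i + dlam i j) • (yP n i * xP n j))
    (hBxx : ∀ i j : Fin n, i < j →
      B.br (xP n j) (xP n i) = (-(dq i + dlam i j)) • (xP n i * xP n j))
    (hBxyi : ∀ i : Fin n, B.br (xP n i) (yP n i) = dq i • zP n ((i : ℕ) + 1))
    :
    ∀ P : Ideal (MvPolynomial (Fin n ⊕ Fin n) ℂ), IsPoissonPrime B.br P →
      ((PoissonPrimitive B.br P ↔ PoissonRational (MvPolynomial (Fin n ⊕ Fin n) ℂ) B.br P) ∧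
       (PoissonRational (MvPolynomial (Fin n ⊕ Fin n) ℂ) B.br P ↔
          PoissonLocallyClosed B.br P)) := by
  have hanti : ∀ i j, dlam j i = - dlam i j := by
    intro i j
    have h1 : (fun k => slam i j k + slam j i k) = 0 := by
      apply hfree
      simp_rw [zpow_add₀ (hη0 _), Finset.prod_mul_distrib]
      rw [← hslam, ← hslam, hlam]
    rw [hdlam, hdlam, ← Finset.sum_neg_distrib]
    refine Finset.sum_congr rfl fun k _ => ?_
    have h2 : slam j i k = - slam i j k := by
      have := congrFun h1 k
      simp only [Pi.zero_apply] at this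
      omega
    rw [h2]
    push_cast
    ring
  have hW : WeylBracket dq dlam B := ⟨hanti, hByy, hByx, hBxy, hBxx, hBxyi⟩
  intro P hPP
  have hP : P.IsPrime := hPP.isPrime
  have h1 : PoissonPrimitive B.br P → PoissonRational _ B.br P := fun h => h.rational B hBsmul
  have h2 : PoissonRational _ B.br P → PoissonLocallyClosed B.br P := fun h => hW.locallyClosed h
  have h3 : PoissonLocallyClosed B.br P → PoissonPrimitive B.br P := fun h => h.primitive hPP.1
  exact ⟨⟨h1, h3 ∘ h2⟩, ⟨h2, h1 ∘ h3⟩⟩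
end
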